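/- arXiv:1405.0944 — 3 statements merged into one kernel-verified Lean document; each statement's English description precedes it below -/
import Mathlib

section
/- Let a ∈ ℝ and let f, h : [a, ∞) → (0, ∞) be C² functions. If f''(r)/f(r) ≤ h''(r)/h(r) for all r > a, and f'(a)/f(a) ≤ h'(a)/h(a), then f'(r)/f(r) ≤ h'(r)/h(r) for all r > a. -/
/-! The Wronskian `W = f h' - f' h` has derivative `f h'' - f'' h`, the terms `f' h'` cancelling.
Since `f` and `h` are positive, `f'' / f ≤ h'' / h` says that `W' ≥ 0`, and `f' / f ≤ h' / h` says
that `W ≥ 0`. So `W` is monotone, and it stays nonnegative once it is nonnegative at `a`. -/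

section Wronskian

variable {𝕜 A : Type*} [NontriviallyNormedField 𝕜] [NormedRing A] [NormedAlgebra 𝕜 A]

/-- The Wronskian `f g' - f' g` of `f` and `g`. The derivatives are taken within `s`, so that they
are one-sided at an endpoint of an interval; the order of the factors matters only when `A` is not
commutative. -/
noncomputable def wronskianWithin (f g : 𝕜 → A) (s : Set 𝕜) (x : 𝕜) : A :=
  f x * derivWithin g s x - derivWithin f s x * g x

theorem hasDerivWithinAt_wronskianWithin {f g : 𝕜 → A} {s : Set 𝕜} {x : 𝕜}
    (hf : DifferentiableWithinAt 𝕜 f s x) (hg : DifferentiableWithinAt 𝕜 g s x)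
    (hf' : DifferentiableWithinAt 𝕜 (derivWithin f s) s x)
    (hg' : DifferentiableWithinAt 𝕜 (derivWithin g s) s x) :
    HasDerivWithinAt (wronskianWithin f g s)
      (f x * derivWithin (derivWithin g s) s x - derivWithin (derivWithin f s) s x * g x) s x := by
  have hW := (hf.hasDerivWithinAt.mul hg'.hasDerivWithinAt).sub
    (hf'.hasDerivWithinAt.mul hg.hasDerivWithinAt)
  exact hW.congr_deriv (by abel)

end Wronskian

theorem differentiableOn_derivWithin_of_contDiffOn {𝕜 F : Type*} [NontriviallyNormedField 𝕜]
    [NormedAddCommGroup F] [NormedSpace 𝕜 F] {f : 𝕜 → F} {s : Set 𝕜} {n : WithTop ℕ∞}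
    (hf : ContDiffOn 𝕜 n f s) (hn : 2 ≤ n) (hs : UniqueDiffOn 𝕜 s) :
    DifferentiableOn 𝕜 (derivWithin f s) s :=
  (hf.derivWithin hs (one_add_one_eq_two.trans_le hn)).differentiableOn one_ne_zero

section Comparison

variable {f g : ℝ → ℝ} {s : Set ℝ}

theorem derivWithin_div_le_iff_wronskianWithin_nonneg {x : ℝ} (hfx : 0 < f x) (hgx : 0 < g x) :
    derivWithin f s x / f x ≤ derivWithin g s x / g x ↔ 0 ≤ wronskianWithin f g s x := by
  rw [div_le_div_iff₀ hfx hgx, wronskianWithin, sub_nonneg, mul_comm (f x)]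

theorem monotoneOn_wronskianWithin (hs : Convex ℝ s)
    (hf : DifferentiableOn ℝ f s) (hg : DifferentiableOn ℝ g s)
    (hf' : DifferentiableOn ℝ (derivWithin f s) s) (hg' : DifferentiableOn ℝ (derivWithin g s) s)
    (hfg : ∀ x ∈ interior s,
      derivWithin (derivWithin f s) s x * g x ≤ f x * derivWithin (derivWithin g s) s x) :
    MonotoneOn (wronskianWithin f g s) s := by
  have hW : ∀ x ∈ s, HasDerivWithinAt (wronskianWithin f g s)
      (f x * derivWithin (derivWithin g s) s x - derivWithin (derivWithin f s) s x * g x) s x :=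
    fun x hx ↦ hasDerivWithinAt_wronskianWithin (hf x hx) (hg x hx) (hf' x hx) (hg' x hx)
  exact monotoneOn_of_hasDerivWithinAt_nonneg hs (fun x hx ↦ (hW x hx).continuousWithinAt)
    (fun x hx ↦ (hW x (interior_subset hx)).mono interior_subset)
    fun x hx ↦ sub_nonneg.2 (hfg x hx)

theorem sturm_comparison_general (hs : Convex ℝ s)
    (hf : DifferentiableOn ℝ f s) (hg : DifferentiableOn ℝ g s)
    (hf' : DifferentiableOn ℝ (derivWithin f s) s) (hg' : DifferentiableOn ℝ (derivWithin g s) s)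
    (hfpos : ∀ x ∈ s, 0 < f x) (hgpos : ∀ x ∈ s, 0 < g x)
    (hfg : ∀ x ∈ interior s,
      derivWithin (derivWithin f s) s x / f x ≤ derivWithin (derivWithin g s) s x / g x)
    {a r : ℝ} (ha : a ∈ s) (hr : r ∈ s) (har : a ≤ r)
    (hinit : derivWithin f s a / f a ≤ derivWithin g s a / g a) :
    derivWithin f s r / f r ≤ derivWithin g s r / g r := by
  have hmono : MonotoneOn (wronskianWithin f g s) s := by
    refine monotoneOn_wronskianWithin hs hf hg hf' hg' fun x hx ↦ ?_
    have hxs := interior_subset hx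
    rw [mul_comm (f x)]
    exact (div_le_div_iff₀ (hfpos x hxs) (hgpos x hxs)).1 (hfg x hx)
  rw [derivWithin_div_le_iff_wronskianWithin_nonneg (hfpos a ha) (hgpos a ha)] at hinit
  rw [derivWithin_div_le_iff_wronskianWithin_nonneg (hfpos r hr) (hgpos r hr)]
  exact hinit.trans (hmono ha hr har)

end Comparison

/-- Sturm's comparison theorem (the "Laplacian Comparison Theorem"):
if `f, h` are positive `C²` functions on `[a, ∞)` with `f''/f ≤ h''/h` on `(a, ∞)`
and `f'(a)/f(a) ≤ h'(a)/h(a)`, then `f'(r)/f(r) ≤ h'(r)/h(r)` for all `r > a`. -/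
theorem sturm_comparison (a : ℝ) (f h : ℝ → ℝ)
    (hf : ContDiffOn ℝ 2 f (Set.Ici a)) (hh : ContDiffOn ℝ 2 h (Set.Ici a))
    (hfpos : ∀ r ∈ Set.Ici a, 0 < f r) (hhpos : ∀ r ∈ Set.Ici a, 0 < h r)
    (hcmp : ∀ r, a < r →
      derivWithin (derivWithin f (Set.Ici a)) (Set.Ici a) r / f r ≤
        derivWithin (derivWithin h (Set.Ici a)) (Set.Ici a) r / h r)
    (hinit : derivWithin f (Set.Ici a) a / f a ≤ derivWithin h (Set.Ici a) a / h a) :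
    ∀ r, a < r →
      derivWithin f (Set.Ici a) r / f r ≤ derivWithin h (Set.Ici a) r / h r :=
  fun _ hr ↦ sturm_comparison_general (convex_Ici a)
    (hf.differentiableOn two_ne_zero) (hh.differentiableOn two_ne_zero)
    (differentiableOn_derivWithin_of_contDiffOn hf le_rfl (uniqueDiffOn_Ici a))
    (differentiableOn_derivWithin_of_contDiffOn hh le_rfl (uniqueDiffOn_Ici a))
    hfpos hhpos (interior_Ici (a := a) ▸ hcmp) Set.self_mem_Ici hr.le hr.le hinit
end

section
/- Let 1 < r₁ < r₂, and assume that the mean-curvature comparison (∂f/∂r)(r,θ)/f(r,θ) ≤ (1 + log r)/(r log r) holds for all r ∈ (r₁, r₂) and all θ. Let u : ℝ² → ℝ be a C² subharmonic function (Δ_g u ≥ 0), and for ρ > 0 set M_ρ = max_{θ ∈ [0,2π)} u(ρ cos θ, ρ sin θ). Then for every r with r₁ < r < r₂, M_r ≤ ( M_{r₁} · log(log r₂ / log r) + M_{r₂} · log(log r / log r₁) ) / log(log r₂ / log r₁). -/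
open Real Filter Set

/-- The Laplace–Beltrami operator of the metric `g = dr² + f(r,θ)² dθ²` acting on a
function `u` of the plane, expressed in polar coordinates `(r, θ)`. -/
noncomputable def polarLaplacian (f : ℝ → ℝ → ℝ) (u : ℝ × ℝ → ℝ) (r θ : ℝ) : ℝ :=
  deriv (deriv (fun s => u (s * Real.cos θ, s * Real.sin θ))) r
    + (deriv (fun s => f s θ) r / f r θ) *
        deriv (fun s => u (s * Real.cos θ, s * Real.sin θ)) r
    + (1 / (f r θ) ^ 2) *
        deriv (deriv (fun t => u (r * Real.cos t, r * Real.sin t))) θ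
    - (deriv (fun t => f r t) θ / (f r θ) ^ 3) *
        deriv (fun t => u (r * Real.cos t, r * Real.sin t)) θ

/-- `M_ρ = max_{θ ∈ [0, 2π)} u(ρ cos θ, ρ sin θ)`. -/
noncomputable def Mmax (u : ℝ × ℝ → ℝ) (ρ : ℝ) : ℝ :=
  sSup ((fun θ => u (ρ * Real.cos θ, ρ * Real.sin θ)) '' Set.Ico 0 (2 * Real.pi))

open MeasureTheory Topology

/-! Write `V` for `u` in polar coordinates and `F` for `f`. Once `M_r` is known to increase with
`r`, the line through `M_{r₁}` and `M_{r₂}` in the variable `log (log r)` has nonnegative slope, so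
the mean-curvature bound makes it a supersolution and the maximum principle puts `V` below it.

For the monotonicity, `W = (V - M_{r₂})₊³` is subharmonic and has zero flux through the circle of
radius `r₂`. The flux increases with the radius, so if it is nonnegative in the limit `r → 0⁺`,
then `Δ W = 0`; as `Δ W` dominates `6 (V - M_{r₂})₊ |∇V|²`, this makes `W` constant, hence zero.

The limit is the delicate point, since `F(r, θ) → 0` only pointwise in `θ`. Cutting the flux off
where `F ≤ 1` costs `o(1)` by dominated convergence. The divergence theorem bounds the remaining
flux through a sector from below by `-O(r)`, up to the flux through the two bounding rays, which
vanishes if `r ≤ 1/n` and the rays lie in `E_n = {θ | F(s, θ) ≤ 1 for s ≤ 1/n}`. The closed sets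
`E_n` cover the circle, so a Baire category argument in the style of Looman–Menchoff shows that
the flux, corrected by `O(r)`, increases with the angle; the case of `r > 1/n` follows from that of
smaller radii. -/

section RealAnalysis

variable {φ : ℝ → ℝ} {a b : ℝ}

lemma monotoneOn_Icc_of_frequently_right (hφ : ContinuousOn φ (Icc a b))
    (hright : ∀ x ∈ Ioo a b, ∀ ε > 0, ∃ᶠ y in 𝓝[>] x, φ x - ε * (y - x) ≤ φ y) :
    MonotoneOn φ (Icc a b) := by
  have hinterior : ∀ c ∈ Ioo a b, ∀ d ≤ b, c ≤ d → φ c ≤ φ d := by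
    intro c hc d hd hcd
    have hmem : ∀ x ∈ Ico c d, x ∈ Ioo a b := fun x hx =>
      ⟨hc.1.trans_le hx.1, hx.2.trans_le hd⟩
    refine neg_le_neg_iff.mp (image_le_of_liminf_slope_right_le_deriv_boundary (f := -φ)
      (B := fun _ => -φ c) (B' := 0) (hφ.mono (Icc_subset_Icc hc.1.le hd)).neg le_rfl
      continuousOn_const (fun x _ => hasDerivWithinAt_const x _ _) (fun x hx ε hε => ?_)
      (right_mem_Icc.mpr hcd))
    refine ((hright x (hmem x hx) (ε / 2) (half_pos hε)).and_eventually
      self_mem_nhdsWithin).mono fun y hy => ?_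
    have hpos : 0 < y - x := sub_pos.mpr hy.2
    rw [slope_def_field, div_lt_iff₀ hpos, Pi.neg_apply, Pi.neg_apply]
    linarith [hy.1, mul_pos hε hpos]
  intro c hc d hd hcd
  rcases hcd.eq_or_lt with rfl | hlt
  · exact le_rfl
  have hsub : Ioo c d ⊆ Icc a b := fun x hx => ⟨hc.1.trans hx.1.le, hx.2.le.trans hd.2⟩
  exact ContinuousWithinAt.closure_le (by simp [closure_Ioo hlt.ne, hcd]) ((hφ c hc).mono hsub)
    continuousWithinAt_const fun x hx =>
      hinterior x ⟨hc.1.trans_lt hx.1, hx.2.trans_le hd.2⟩ d hd.2 hx.2.le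

lemma monotoneOn_Icc_of_eventually_right_of_isClosed {B : Set ℝ} (hB : IsClosed B)
    (hφ : ContinuousOn φ (Icc a b))
    (hoff : ∀ x ∈ Ioo a b, x ∉ B → ∀ᶠ y in 𝓝[>] x, φ x ≤ φ y)
    (hon : ∀ x ∈ Ioo a b, x ∈ B → ∀ ε > 0, ∀ᶠ y in 𝓝[>] x, y ∈ B → φ x - ε * (y - x) ≤ φ y) :
    MonotoneOn φ (Icc a b) := by
  refine monotoneOn_Icc_of_frequently_right hφ fun x hx ε hε => ?_
  by_cases hacc : ∃ᶠ y in 𝓝[>] x, y ∈ B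
  · have hxB : x ∈ B := hB.closure_subset
      (mem_closure_iff_frequently.mpr (hacc.filter_mono nhdsWithin_le_nhds))
    exact (hacc.and_eventually (hon x hx hxB ε hε)).mono fun y hy => hy.2 hy.1
  · obtain ⟨z, ⟨hxz, hzb⟩, hz⟩ :=
      (mem_nhdsGT_iff_exists_mem_Ioc_Ioo_subset hx.2).mp (not_frequently.mp hacc)
    have hgap : MonotoneOn φ (Icc x z) := by
      refine monotoneOn_Icc_of_frequently_right (hφ.mono (Icc_subset_Icc hx.1.le hzb))
        fun y hy δ hδ => Eventually.frequently ?_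
      filter_upwards [hoff y ⟨hx.1.trans hy.1, hy.2.trans_le hzb⟩ (hz hy), self_mem_nhdsWithin]
        with w hw hyw
      linarith [mul_pos hδ (sub_pos.mpr hyw)]
    refine Eventually.frequently ?_
    filter_upwards [Ioo_mem_nhdsGT hxz] with y hy
    linarith [hgap (left_mem_Icc.mpr hxz.le) (Ioo_subset_Icc_self hy) hy.1.le,
      mul_pos hε (sub_pos.mpr hy.1)]

lemma exists_ball_inter_subset_of_isClosed_cover {X : Type*} [PseudoMetricSpace X] [CompleteSpace X]
    {B : Set X} (hB : IsClosed B) (hne : B.Nonempty) {E : ℕ → Set X} (hE : ∀ n, IsClosed (E n))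
    (hcover : B ⊆ ⋃ n, E n) : ∃ n, ∃ x ∈ B, ∃ η > 0, B ∩ Metric.ball x η ⊆ E n := by
  have : Nonempty B := hne.to_subtype
  have : CompleteSpace B := hB.completeSpace_coe
  obtain ⟨n, x, hx⟩ := nonempty_interior_of_iUnion_of_closed
    (f := fun n => ((↑) : B → X) ⁻¹' E n) (fun n => (hE n).preimage continuous_subtype_val)
    (by rwa [← preimage_iUnion, preimage_eq_univ_iff, Subtype.range_coe])
  obtain ⟨η, hη, hball⟩ := Metric.mem_nhds_iff.mp (mem_interior_iff_mem_nhds.mp hx)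
  exact ⟨n, x, x.2, η, hη, fun y hy => hball (show (⟨y, hy.1⟩ : B) ∈ Metric.ball x η from hy.2)⟩

lemma hasDerivAt_comp_max {φ' : ℝ → ℝ} {c : ℝ} (hφ : ∀ y ≥ c, HasDerivAt φ (φ' y) y)
    (hc : φ' c = 0) (x : ℝ) : HasDerivAt (fun s => φ (max s c)) (φ' (max x c)) x := by
  rcases lt_trichotomy x c with hx | rfl | hx
  · rw [max_eq_right hx.le, hc]
    refine (hasDerivAt_const x (φ c)).congr_of_eventuallyEq ?_
    filter_upwards [Iio_mem_nhds hx] with s hs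
    rw [max_eq_right hs.le]
  · rw [max_self]
    have hleft : HasDerivWithinAt (fun s => φ (max s x)) (φ' x) (Iic x) x := by
      rw [hc]
      exact (hasDerivWithinAt_const x _ (φ x)).congr (fun s hs => by rw [max_eq_right hs])
        (by rw [max_self])
    have hright : HasDerivWithinAt (fun s => φ (max s x)) (φ' x) (Ici x) x :=
      (hφ x le_rfl).hasDerivWithinAt.congr (fun s hs => by rw [max_eq_left hs])
        (by rw [max_self])
    simpa [Iic_union_Ici] using hleft.union hright
  · rw [max_eq_left hx.le]
    refine (hφ x hx.le).congr_of_eventuallyEq ?_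
    filter_upwards [Ioi_mem_nhds hx] with s hs
    rw [max_eq_left hs.le]

lemma hasDerivAt_max_sub_pow (c x : ℝ) (n : ℕ) :
    HasDerivAt (fun t => max (t - c) 0 ^ (n + 2)) ((n + 2) * max (x - c) 0 ^ (n + 1)) x := by
  have h := hasDerivAt_comp_max (φ := fun y => y ^ (n + 2)) (c := 0)
    (fun y _ => hasDerivAt_pow (n + 2) y) (by simp) (x - c)
  simpa using h.comp_sub_const x c

lemma contDiff_max_sub_pow (c : ℝ) (n : ℕ) :
    ContDiff ℝ n fun t : ℝ => max (t - c) 0 ^ (n + 1) := by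
  induction n with
  | zero => exact contDiff_zero.mpr (by fun_prop)
  | succ n ih =>
    push_cast
    refine contDiff_succ_iff_deriv.mpr
      ⟨fun t => (hasDerivAt_max_sub_pow c t n).differentiableAt, by simp, ?_⟩
    rw [funext fun t => (hasDerivAt_max_sub_pow c t n).deriv]
    exact contDiff_const.mul ih

lemma nonpos_of_isLocalMax_of_hasDerivAt_hasDerivAt {φ' : ℝ → ℝ} {x c : ℝ}
    (hmax : IsLocalMax φ x) (hφ : ∀ᶠ y in 𝓝 x, HasDerivAt φ (φ' y) y)
    (hφ' : HasDerivAt φ' c x) : c ≤ 0 := by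
  by_contra! hc
  have hderiv : deriv φ =ᶠ[𝓝 x] φ' := hφ.mono fun y hy => hy.deriv
  have hsecond : deriv (deriv φ) x = c := hderiv.deriv_eq.trans hφ'.deriv
  have hmin : IsLocalMin φ x := isLocalMin_of_deriv_deriv_pos (hsecond.symm ▸ hc)
    hmax.deriv_eq_zero hφ.self_of_nhds.continuousAt
  have hconst : φ =ᶠ[𝓝 x] fun _ => φ x := by
    filter_upwards [hmax, hmin] with y hle hge using le_antisymm hle hge
  have hzero : deriv (deriv φ) x = 0 := by
    rw [hconst.deriv.deriv_eq]
    simp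
  exact hc.ne' (hsecond.symm.trans hzero)

lemma eqOn_zero_of_setIntegral_nonpos {X : Type*} [TopologicalSpace X] [MeasurableSpace X]
    [BorelSpace X] {μ : Measure X} [μ.IsOpenPosMeasure] [IsFiniteMeasureOnCompacts μ]
    [T2Space X] {G : X → ℝ} {S : Set X}
    (hS : IsCompact S) (hreg : S ⊆ closure (interior S)) (hG : ContinuousOn G S)
    (hnonneg : ∀ x ∈ S, 0 ≤ G x) (hint : ∫ x in S, G x ∂μ ≤ 0) : EqOn G 0 S := by
  have hmeas := hS.measurableSet
  have hae := (setIntegral_eq_zero_iff_of_nonneg_ae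
    ((ae_restrict_iff' hmeas).mpr (Eventually.of_forall hnonneg))
    (hG.integrableOn_compact' hS hmeas)).mp (hint.antisymm (setIntegral_nonneg hmeas hnonneg))
  exact Measure.eqOn_of_ae_eq hae hG continuousOn_const hreg

end RealAnalysis

section CategoryArgument

variable {ι : Type*} {Φ : ι → ℝ → ℝ} {S : Set ℝ} {a b : ℝ}

/-- The members of the family `Φ` are monotone on the trace on `S` of one common neighbourhood of
`x`. -/
def MonotoneNear (Φ : ι → ℝ → ℝ) (S : Set ℝ) (x : ℝ) : Prop :=
  ∃ U ∈ 𝓝 x, ∀ i, MonotoneOn (Φ i) (U ∩ S)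

lemma isOpen_setOf_monotoneNear : IsOpen {x | MonotoneNear Φ S x} := by
  refine isOpen_iff_mem_nhds.mpr fun x ⟨U, hU, hmono⟩ => ?_
  filter_upwards [eventually_mem_nhds_iff.mpr hU] with y hy using ⟨U, hy, hmono⟩

lemma MonotoneNear.eventually_right_le {x : ℝ} (h : MonotoneNear Φ (Icc a b) x)
    (hx : x ∈ Ico a b) (i : ι) : ∀ᶠ y in 𝓝[>] x, Φ i x ≤ Φ i y := by
  obtain ⟨U, hU, hmono⟩ := h
  filter_upwards [nhdsWithin_le_nhds hU, Ioo_mem_nhdsGT hx.2] with y hyU hy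
  exact hmono i ⟨mem_of_mem_nhds hU, hx.1, hx.2.le⟩ ⟨hyU, hx.1.trans hy.1.le, hy.2.le⟩ hy.1.le

lemma monotoneNear_of_isClosed_of_eventually_right [SemilatticeInf ι] {E : Set ℝ} {i₀ : ι}
    {x η : ℝ} (hη : 0 < η)
    (hE : ∀ y ∈ Metric.ball x η ∩ Icc a b, ¬ MonotoneNear Φ (Icc a b) y → y ∈ E)
    (hcont : ∀ i, ContinuousOn (Φ i) (Icc a b))
    (hincr : ∀ c ∈ Icc a b, ∀ d ∈ Icc a b, c ≤ d → Monotone fun i => Φ i d - Φ i c)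
    (hright : ∀ i ≤ i₀, ∀ y ∈ E, ∀ ε > 0, ∀ᶠ z in 𝓝[>] y, z ∈ E → Φ i y - ε * (z - y) ≤ Φ i z) :
    MonotoneNear Φ (Icc a b) x := by
  refine ⟨Metric.ball x η, Metric.ball_mem_nhds x hη, fun i c hc d hd hcd => ?_⟩
  have hord : (Metric.ball x η ∩ Icc a b).OrdConnected := by
    rw [Real.ball_eq_Ioo]
    infer_instance
  have hsub : Icc c d ⊆ Metric.ball x η ∩ Icc a b := hord.out hc hd
  have hmono : MonotoneOn (Φ (i ⊓ i₀)) (Icc c d) := by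
    refine monotoneOn_Icc_of_eventually_right_of_isClosed
      (isOpen_setOf_monotoneNear (Φ := Φ) (S := Icc a b)).isClosed_compl
      ((hcont _).mono fun y hy => (hsub hy).2) (fun y hy hgood => ?_) fun y hy hbad ε hε => ?_
    · exact (not_not.mp hgood).eventually_right_le
        ⟨hc.2.1.trans hy.1.le, hy.2.trans_le hd.2.2⟩ _
    · filter_upwards [hright _ inf_le_right y (hE y (hsub (Ioo_subset_Icc_self hy)) hbad) ε hε,
        Ioo_mem_nhdsGT hy.2] with z hz hyz hzbad
      exact hz (hE z (hsub ⟨hy.1.le.trans hyz.1.le, hyz.2.le⟩) hzbad)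
  have hle := hmono (left_mem_Icc.mpr hcd) (right_mem_Icc.mpr hcd) hcd
  have hincr' := hincr c hc.2 d hd.2 hcd (inf_le_left : i ⊓ i₀ ≤ i)
  simp only at hincr'
  linarith

lemma monotoneOn_Icc_of_isClosed_cover [SemilatticeInf ι] {E : ℕ → Set ℝ} {δ : ℕ → ι}
    (hE : ∀ n, IsClosed (E n)) (hcover : Icc a b ⊆ ⋃ n, E n)
    (hcont : ∀ i, ContinuousOn (Φ i) (Icc a b))
    (hincr : ∀ c ∈ Icc a b, ∀ d ∈ Icc a b, c ≤ d → Monotone fun i => Φ i d - Φ i c)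
    (hright : ∀ n, ∀ i ≤ δ n, ∀ x ∈ E n, ∀ ε > 0,
      ∀ᶠ y in 𝓝[>] x, y ∈ E n → Φ i x - ε * (y - x) ≤ Φ i y)
    (i : ι) : MonotoneOn (Φ i) (Icc a b) := by
  have hgood : ∀ x ∈ Icc a b, MonotoneNear Φ (Icc a b) x := by
    by_contra! hbad
    obtain ⟨n, x, hx, η, hη, hsub⟩ := exists_ball_inter_subset_of_isClosed_cover
      (isClosed_Icc.inter (isOpen_setOf_monotoneNear (Φ := Φ) (S := Icc a b)).isClosed_compl)
      hbad hE (inter_subset_left.trans hcover)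
    exact hx.2 (monotoneNear_of_isClosed_of_eventually_right hη
      (fun y hy hynot => hsub ⟨⟨hy.2, hynot⟩, hy.1⟩) hcont hincr (hright n))
  exact monotoneOn_Icc_of_eventually_right_of_isClosed isClosed_empty (hcont i)
    (fun x hx _ => (hgood x (Ioo_subset_Icc_self hx)).eventually_right_le
      (Ioo_subset_Ico_self hx) i) fun _ _ hx => hx.elim

end CategoryArgument

section PolarCoordinates

/-- The domain of polar coordinates `(r, θ)` with `0 < r`, where `θ` ranges over all of `ℝ`. -/
def rightHalfPlane : Set (ℝ × ℝ) := {p | 0 < p.1}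

/-- The partial derivative in the radial coordinate `p.1`. -/
noncomputable def radialDeriv (V : ℝ × ℝ → ℝ) (p : ℝ × ℝ) : ℝ := fderiv ℝ V p (1, 0)

/-- The partial derivative in the angular coordinate `p.2`. -/
noncomputable def angularDeriv (V : ℝ × ℝ → ℝ) (p : ℝ × ℝ) : ℝ := fderiv ℝ V p (0, 1)

/-- The Laplace–Beltrami operator of the metric `dr² + F(r,θ)² dθ²`, acting on functions of the
polar coordinates. -/
noncomputable def warpedLaplacian (F V : ℝ × ℝ → ℝ) (p : ℝ × ℝ) : ℝ :=
  radialDeriv (radialDeriv V) p + radialDeriv F p / F p * radialDeriv V p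
    + angularDeriv (angularDeriv V) p / F p ^ 2
    - angularDeriv F p / F p ^ 3 * angularDeriv V p

/-- `F` is a positive `C¹` coefficient of a metric `dr² + F(r,θ)² dθ²` away from `r = 0`. -/
structure IsWarpingFunction (F : ℝ × ℝ → ℝ) : Prop where
  contDiffOn : ContDiffOn ℝ 1 F rightHalfPlane
  pos : ∀ p ∈ rightHalfPlane, 0 < F p

variable {F V G : ℝ × ℝ → ℝ} {κ : ℝ → ℝ} {r θ : ℝ}

lemma isOpen_rightHalfPlane : IsOpen rightHalfPlane := isOpen_lt continuous_const continuous_fst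

lemma Icc_subset_rightHalfPlane {p q : ℝ × ℝ} (hp : p ∈ rightHalfPlane) :
    Icc p q ⊆ rightHalfPlane :=
  fun _ hz => lt_of_lt_of_le hp hz.1.1

lemma continuous_angular_slice (hG : ContinuousOn G rightHalfPlane) (hr : 0 < r) :
    Continuous fun t => G (r, t) :=
  hG.comp_continuous (by fun_prop) fun _ => hr

lemma continuousOn_radial_slice (hG : ContinuousOn G rightHalfPlane) (θ : ℝ) :
    ContinuousOn (fun s => G (s, θ)) (Ioi 0) :=
  hG.comp (by fun_prop) fun _ hs => hs

lemma hasDerivAt_radialDeriv (hV : DifferentiableAt ℝ V (r, θ)) :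
    HasDerivAt (fun s => V (s, θ)) (radialDeriv V (r, θ)) r :=
  hV.hasFDerivAt.comp_hasDerivAt r ((hasDerivAt_id r).prodMk (hasDerivAt_const r θ))

lemma hasDerivAt_angularDeriv (hV : DifferentiableAt ℝ V (r, θ)) :
    HasDerivAt (fun t => V (r, t)) (angularDeriv V (r, θ)) θ :=
  hV.hasFDerivAt.comp_hasDerivAt θ ((hasDerivAt_const θ r).prodMk (hasDerivAt_id θ))

lemma contDiff_one_radialDeriv (hV : ContDiff ℝ 2 V) : ContDiff ℝ 1 (radialDeriv V) :=
  (hV.fderiv_right one_add_one_eq_two.le).clm_apply contDiff_const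

lemma contDiff_one_angularDeriv (hV : ContDiff ℝ 2 V) : ContDiff ℝ 1 (angularDeriv V) :=
  (hV.fderiv_right one_add_one_eq_two.le).clm_apply contDiff_const

lemma continuous_radialDeriv (hV : ContDiff ℝ 1 V) : Continuous (radialDeriv V) :=
  (hV.continuous_fderiv one_ne_zero).clm_apply continuous_const

lemma continuous_angularDeriv (hV : ContDiff ℝ 1 V) : Continuous (angularDeriv V) :=
  (hV.continuous_fderiv one_ne_zero).clm_apply continuous_const

lemma periodic_angularDeriv {c : ℝ} (hV : Differentiable ℝ V)
    (hper : ∀ r, Function.Periodic (fun t => V (r, t)) c) (r : ℝ) :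
    Function.Periodic (fun t => angularDeriv V (r, t)) c := fun t => by
  have hshift := (hasDerivAt_angularDeriv (hV (r, t + c))).comp_add_const t c
  rw [funext (hper r)] at hshift
  exact hshift.unique (hasDerivAt_angularDeriv (hV (r, t)))

lemma radialDeriv_comp {Ψ : ℝ → ℝ} {Ψ' : ℝ} {p : ℝ × ℝ} (hΨ : HasDerivAt Ψ Ψ' (V p))
    (hV : DifferentiableAt ℝ V p) :
    radialDeriv (fun q => Ψ (V q)) p = Ψ' * radialDeriv V p := by
  have hcomp : HasFDerivAt (fun q => Ψ (V q)) (Ψ' • fderiv ℝ V p) p :=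
    hΨ.comp_hasFDerivAt p hV.hasFDerivAt
  rw [radialDeriv, hcomp.fderiv]
  rfl

lemma angularDeriv_comp {Ψ : ℝ → ℝ} {Ψ' : ℝ} {p : ℝ × ℝ} (hΨ : HasDerivAt Ψ Ψ' (V p))
    (hV : DifferentiableAt ℝ V p) :
    angularDeriv (fun q => Ψ (V q)) p = Ψ' * angularDeriv V p := by
  have hcomp : HasFDerivAt (fun q => Ψ (V q)) (Ψ' • fderiv ℝ V p) p :=
    hΨ.comp_hasFDerivAt p hV.hasFDerivAt
  rw [angularDeriv, hcomp.fderiv]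
  rfl

lemma radialDeriv_mul {p : ℝ × ℝ} (hV : DifferentiableAt ℝ V p) (hG : DifferentiableAt ℝ G p) :
    radialDeriv (fun q => V q * G q) p = V p * radialDeriv G p + radialDeriv V p * G p := by
  simp [radialDeriv, fderiv_fun_mul hV hG, mul_comm]

lemma angularDeriv_mul {p : ℝ × ℝ} (hV : DifferentiableAt ℝ V p) (hG : DifferentiableAt ℝ G p) :
    angularDeriv (fun q => V q * G q) p = V p * angularDeriv G p + angularDeriv V p * G p := by
  simp [angularDeriv, fderiv_fun_mul hV hG, mul_comm]

lemma warpedLaplacian_comp (hV : ContDiff ℝ 2 V) {Ψ Ψ' Ψ'' : ℝ → ℝ}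
    (hΨ : ∀ t, HasDerivAt Ψ (Ψ' t) t) (hΨ' : ∀ t, HasDerivAt Ψ' (Ψ'' t) t) (p : ℝ × ℝ) :
    warpedLaplacian F (fun q => Ψ (V q)) p = Ψ' (V p) * warpedLaplacian F V p
      + Ψ'' (V p) * (radialDeriv V p ^ 2 + angularDeriv V p ^ 2 / F p ^ 2) := by
  have hVd : Differentiable ℝ V := hV.differentiable two_ne_zero
  have hΨV : DifferentiableAt ℝ (fun q => Ψ' (V q)) p :=
    (hΨ' (V p)).differentiableAt.fun_comp' p (hVd p)
  have hr : radialDeriv (fun q => Ψ (V q)) = fun q => Ψ' (V q) * radialDeriv V q :=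
    funext fun q => radialDeriv_comp (hΨ (V q)) (hVd q)
  have hθ : angularDeriv (fun q => Ψ (V q)) = fun q => Ψ' (V q) * angularDeriv V q :=
    funext fun q => angularDeriv_comp (hΨ (V q)) (hVd q)
  rw [warpedLaplacian, hr, hθ,
    radialDeriv_mul hΨV ((contDiff_one_radialDeriv hV).differentiable one_ne_zero p),
    angularDeriv_mul hΨV ((contDiff_one_angularDeriv hV).differentiable one_ne_zero p),
    radialDeriv_comp (hΨ' (V p)) (hVd p), angularDeriv_comp (hΨ' (V p)) (hVd p), warpedLaplacian]
  ring

namespace IsWarpingFunction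

variable (hF : IsWarpingFunction F)
include hF

lemma continuousOn : ContinuousOn F rightHalfPlane := hF.contDiffOn.continuousOn

lemma differentiableAt {p : ℝ × ℝ} (hp : p ∈ rightHalfPlane) : DifferentiableAt ℝ F p :=
  (hF.contDiffOn.differentiableOn one_ne_zero).differentiableAt
    (isOpen_rightHalfPlane.mem_nhds hp)

lemma continuousOn_comp (hκ : ContinuousOn κ (Ioi 0)) :
    ContinuousOn (fun p => κ (F p)) rightHalfPlane :=
  hκ.comp hF.continuousOn hF.pos

lemma continuousOn_warpedLaplacian (hV : ContDiff ℝ 2 V) :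
    ContinuousOn (warpedLaplacian F V) rightHalfPlane := by
  have hFc := hF.continuousOn
  have hne : ∀ p ∈ rightHalfPlane, F p ≠ 0 := fun p hp => (hF.pos p hp).ne'
  have hdF : ContinuousOn (fderiv ℝ F) rightHalfPlane :=
    hF.contDiffOn.continuousOn_fderiv_of_isOpen isOpen_rightHalfPlane le_rfl
  have hFr : ContinuousOn (radialDeriv F) rightHalfPlane := hdF.clm_apply continuousOn_const
  have hFθ : ContinuousOn (angularDeriv F) rightHalfPlane := hdF.clm_apply continuousOn_const
  have hVr := contDiff_one_radialDeriv hV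
  have hVθ := contDiff_one_angularDeriv hV
  exact (((continuous_radialDeriv hVr).continuousOn.add
    ((hFr.div hFc hne).mul hVr.continuous.continuousOn)).add
    ((continuous_angularDeriv hVθ).continuousOn.div (hFc.pow 2) fun p hp =>
      pow_ne_zero _ (hne p hp))).sub
    ((hFθ.div (hFc.pow 3) fun p hp => pow_ne_zero _ (hne p hp)).mul hVθ.continuous.continuousOn)

end IsWarpingFunction

end PolarCoordinates

section Divergence

/-- The flux of the vector field `G V_r ∂_r` through the arc `[a, b]` of the circle of radius `r`,
with respect to the coordinate measure `dθ`. -/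
noncomputable def radialFlux (G V : ℝ × ℝ → ℝ) (r a b : ℝ) : ℝ :=
  ∫ θ in a..b, G (r, θ) * radialDeriv V (r, θ)

/-- The flux of the vector field `G V_θ ∂_θ` through the segment `[r₁, r₂]` of the ray of angle `θ`,
with respect to the coordinate measure `dr`. -/
noncomputable def angularFlux (G V : ℝ × ℝ → ℝ) (θ r₁ r₂ : ℝ) : ℝ :=
  ∫ r in r₁..r₂, G (r, θ) * angularDeriv V (r, θ)

/-- The weights of a vector field `(K(F) V_r, -H(F) V_θ)` whose divergence has the leading term
`F κ(F) Δ V` for every metric `dr² + F² dθ²`. -/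
structure IsFluxWeight (κ K H : ℝ → ℝ) : Prop where
  continuousOn : ContinuousOn κ (Ioi 0)
  hasDerivAt_radial : ∀ s > 0, HasDerivAt K (κ s) s
  hasDerivAt_angular : ∀ s > 0, HasDerivAt H (κ s / s ^ 2) s

/-- The divergence `∂_r (K(F) V_r) - ∂_θ (H(F) V_θ)` for an `IsFluxWeight κ K H`, written so that
the derivatives of `F` enter only through the Laplacian of `V`. -/
noncomputable def weightedDivergence (κ K H : ℝ → ℝ) (F V : ℝ × ℝ → ℝ) (p : ℝ × ℝ) : ℝ :=
  F p * κ (F p) * warpedLaplacian F V p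
    - (F p * κ (F p) - K (F p)) * radialDeriv (radialDeriv V) p
    - (κ (F p) / F p + H (F p)) * angularDeriv (angularDeriv V) p

variable {κ K H : ℝ → ℝ} {F V : ℝ × ℝ → ℝ}

namespace IsFluxWeight

variable (hκ : IsFluxWeight κ K H)
include hκ

lemma continuousOn_radial : ContinuousOn K (Ioi 0) :=
  fun s hs => (hκ.hasDerivAt_radial s hs).continuousAt.continuousWithinAt

lemma continuousOn_angular : ContinuousOn H (Ioi 0) :=
  fun s hs => (hκ.hasDerivAt_angular s hs).continuousAt.continuousWithinAt

variable (hF : IsWarpingFunction F) (hV : ContDiff ℝ 2 V)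
include hF hV

lemma continuousOn_radial_mul_radialDeriv :
    ContinuousOn (fun p => K (F p) * radialDeriv V p) rightHalfPlane :=
  (hF.continuousOn_comp hκ.continuousOn_radial).mul
    (contDiff_one_radialDeriv hV).continuous.continuousOn

lemma continuousOn_angular_mul_angularDeriv :
    ContinuousOn (fun p => H (F p) * angularDeriv V p) rightHalfPlane :=
  (hF.continuousOn_comp hκ.continuousOn_angular).mul
    (contDiff_one_angularDeriv hV).continuous.continuousOn

lemma continuousOn_weightedDivergence :
    ContinuousOn (weightedDivergence κ K H F V) rightHalfPlane := by
  have hκF := hF.continuousOn_comp hκ.continuousOn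
  have hVrr := (continuous_radialDeriv (contDiff_one_radialDeriv hV)).continuousOn
    (s := rightHalfPlane)
  have hVθθ := (continuous_angularDeriv (contDiff_one_angularDeriv hV)).continuousOn
    (s := rightHalfPlane)
  exact (((hF.continuousOn.mul hκF).mul (hF.continuousOn_warpedLaplacian hV)).sub
    (((hF.continuousOn.mul hκF).sub (hF.continuousOn_comp hκ.continuousOn_radial)).mul hVrr)).sub
    (((hκF.div hF.continuousOn fun p hp => (hF.pos p hp).ne').add
      (hF.continuousOn_comp hκ.continuousOn_angular)).mul hVθθ)

lemma integrableOn_weightedDivergence {p q : ℝ × ℝ} (hp : p ∈ rightHalfPlane) :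
    IntegrableOn (weightedDivergence κ K H F V) (Icc p q) :=
  ((hκ.continuousOn_weightedDivergence hF hV).mono
    (Icc_subset_rightHalfPlane hp)).integrableOn_compact isCompact_Icc

theorem integral_weightedDivergence {r₁ r₂ a b : ℝ} (hr₁ : 0 < r₁) (hr : r₁ ≤ r₂) (hab : a ≤ b) :
    ∫ p in Icc (r₁, a) (r₂, b), weightedDivergence κ K H F V p =
      radialFlux (fun p => K (F p)) V r₂ a b - radialFlux (fun p => K (F p)) V r₁ a b
        - (angularFlux (fun p => H (F p)) V b r₁ r₂
          - angularFlux (fun p => H (F p)) V a r₁ r₂) := by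
  have hsub : Icc (r₁, a) (r₂, b) ⊆ rightHalfPlane := Icc_subset_rightHalfPlane hr₁
  let A' : ℝ × ℝ → ℝ × ℝ →L[ℝ] ℝ := fun p =>
    K (F p) • fderiv ℝ (radialDeriv V) p + radialDeriv V p • (κ (F p) • fderiv ℝ F p)
  let B' : ℝ × ℝ → ℝ × ℝ →L[ℝ] ℝ := fun p => -(H (F p) • fderiv ℝ (angularDeriv V) p
    + angularDeriv V p • ((κ (F p) / F p ^ 2) • fderiv ℝ F p))
  have hA : ∀ p ∈ rightHalfPlane, HasFDerivAt (fun p => K (F p) * radialDeriv V p) (A' p) p :=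
    fun p hp => ((hκ.hasDerivAt_radial _ (hF.pos p hp)).comp_hasFDerivAt p
      (hF.differentiableAt hp).hasFDerivAt).mul
      ((contDiff_one_radialDeriv hV).differentiable one_ne_zero p).hasFDerivAt
  have hB : ∀ p ∈ rightHalfPlane, HasFDerivAt (fun p => -(H (F p) * angularDeriv V p)) (B' p) p :=
    fun p hp => (((hκ.hasDerivAt_angular _ (hF.pos p hp)).comp_hasFDerivAt p
      (hF.differentiableAt hp).hasFDerivAt).mul
      ((contDiff_one_angularDeriv hV).differentiable one_ne_zero p).hasFDerivAt).neg
  have hdiv : EqOn (fun p => A' p (1, 0) + B' p (0, 1)) (weightedDivergence κ K H F V)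
      (Icc (r₁, a) (r₂, b)) := fun p hp => by
    have hne : F p ≠ 0 := (hF.pos p (hsub hp)).ne'
    simp only [A', B', weightedDivergence, warpedLaplacian, radialDeriv, angularDeriv, add_apply,
      neg_apply, smul_apply, smul_eq_mul]
    field_simp
    ring
  have hinterior : Ioo r₁ r₂ ×ˢ Ioo a b ⊆ rightHalfPlane := fun p hp => hr₁.trans hp.1.1
  rw [← setIntegral_congr_fun measurableSet_Icc hdiv,
    integral_divergence_prod_Icc_of_hasFDerivAt_of_le _ _ A' B' (r₁, a) (r₂, b) ⟨hr, hab⟩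
      ((hκ.continuousOn_radial_mul_radialDeriv hF hV).mono hsub)
      ((hκ.continuousOn_angular_mul_angularDeriv hF hV).neg.mono hsub)
      (fun p hp => hA p (hinterior hp)) (fun p hp => hB p (hinterior hp))
      ((hκ.integrableOn_weightedDivergence hF hV hr₁).congr_fun hdiv.symm measurableSet_Icc)]
  simp only [radialFlux, angularFlux, Pi.neg_apply, intervalIntegral.integral_neg]
  ring

end IsFluxWeight

lemma isFluxWeight_id : IsFluxWeight (fun _ => 1) (fun s => s) (fun s => -s⁻¹) where
  continuousOn := continuousOn_const
  hasDerivAt_radial s _ := hasDerivAt_id s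
  hasDerivAt_angular s hs := (hasDerivAt_inv hs.ne').neg.congr_deriv (by field_simp)

lemma weightedDivergence_id (p : ℝ × ℝ) :
    weightedDivergence (fun _ => 1) (fun s => s) (fun s => -s⁻¹) F V p
      = F p * warpedLaplacian F V p := by
  simp [weightedDivergence]

end Divergence

section Cutoff

/-- The primitive, vanishing on `(-∞, 1]`, of `radialCutoffDeriv`: a `C¹` substitute for
`s ↦ (s - 1)₊` at bounded distance from the identity. -/
noncomputable def radialCutoff (s : ℝ) : ℝ := max s 1 - 2 + (max s 1)⁻¹

/-- The derivative of `radialCutoff`. -/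
noncomputable def radialCutoffDeriv (s : ℝ) : ℝ := 1 - (max s 1)⁻¹ ^ 2

/-- The primitive, vanishing on `(-∞, 1]`, of `radialCutoffDeriv s / s ^ 2`. -/
noncomputable def angularCutoff (s : ℝ) : ℝ := 2 / 3 - (max s 1)⁻¹ + (max s 1)⁻¹ ^ 3 / 3

variable {s : ℝ}

lemma radialCutoff_eq_zero (hs : s ≤ 1) : radialCutoff s = 0 := by
  norm_num [radialCutoff, max_eq_right hs]

lemma radialCutoffDeriv_eq_zero (hs : s ≤ 1) : radialCutoffDeriv s = 0 := by
  norm_num [radialCutoffDeriv, max_eq_right hs]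

lemma angularCutoff_eq_zero (hs : s ≤ 1) : angularCutoff s = 0 := by
  norm_num [angularCutoff, max_eq_right hs]

lemma hasDerivAt_radialCutoff (s : ℝ) : HasDerivAt radialCutoff (radialCutoffDeriv s) s :=
  hasDerivAt_comp_max (φ := fun y => y - 2 + y⁻¹) (φ' := fun y => 1 - y⁻¹ ^ 2)
    (fun y hy => (((hasDerivAt_id y).sub_const 2).add
      (hasDerivAt_inv (zero_lt_one.trans_le hy).ne')).congr_deriv (by rw [inv_pow]; ring))
    (by norm_num) s

lemma hasDerivAt_angularCutoff (s : ℝ) :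
    HasDerivAt angularCutoff (radialCutoffDeriv s / s ^ 2) s := by
  refine (hasDerivAt_comp_max (φ := fun y => 2 / 3 - y⁻¹ + y⁻¹ ^ 3 / 3)
    (φ' := fun y => (1 - y⁻¹ ^ 2) / y ^ 2) (c := 1) (fun y hy => ?_) (by norm_num) s).congr_deriv ?_
  · have hinv := hasDerivAt_inv (zero_lt_one.trans_le hy).ne'
    exact ((hinv.const_sub (2 / 3)).add ((hinv.pow 3).div_const 3)).congr_deriv (by
      push_cast
      ring)
  · change radialCutoffDeriv s / max s 1 ^ 2 = _
    rcases le_total s 1 with hs | hs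
    · rw [radialCutoffDeriv_eq_zero hs, zero_div, zero_div]
    · rw [max_eq_left hs]

lemma isFluxWeight_cutoff : IsFluxWeight radialCutoffDeriv radialCutoff angularCutoff where
  continuousOn := by
    have hpos : ∀ s : ℝ, max s 1 ≠ 0 := fun s => (zero_lt_one.trans_le (le_max_right s 1)).ne'
    unfold radialCutoffDeriv
    fun_prop (disch := simp [hpos])
  hasDerivAt_radial s _ := hasDerivAt_radialCutoff s
  hasDerivAt_angular s _ := hasDerivAt_angularCutoff s

lemma radialCutoffDeriv_nonneg (s : ℝ) : 0 ≤ radialCutoffDeriv s :=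
  sub_nonneg.mpr (pow_le_one₀ (by positivity) (inv_le_one_of_one_le₀ (le_max_right s 1)))

lemma abs_sub_radialCutoff_le (hs : 0 < s) : |s - radialCutoff s| ≤ 2 := by
  rcases le_total s 1 with h | h
  · rw [radialCutoff_eq_zero h, sub_zero, abs_of_pos hs]
    linarith
  · have hinv : 0 < s⁻¹ ∧ s⁻¹ ≤ 1 := ⟨inv_pos.mpr hs, inv_le_one_of_one_le₀ h⟩
    rw [radialCutoff, max_eq_left h, abs_le]
    constructor <;> linarith

lemma abs_mul_radialCutoffDeriv_sub_radialCutoff_le (hs : 0 < s) :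
    |s * radialCutoffDeriv s - radialCutoff s| ≤ 2 := by
  rcases le_total s 1 with h | h
  · simp [radialCutoff_eq_zero h, radialCutoffDeriv_eq_zero h]
  · have hinv : 0 < s⁻¹ ∧ s⁻¹ ≤ 1 := ⟨inv_pos.mpr hs, inv_le_one_of_one_le₀ h⟩
    have heq : s * radialCutoffDeriv s - radialCutoff s = 2 - 2 * s⁻¹ := by
      rw [radialCutoff, radialCutoffDeriv, max_eq_left h]
      field_simp
      ring
    rw [heq, abs_le]
    constructor <;> linarith

lemma abs_angularCutoff_le (hs : 0 < s) : |angularCutoff s| ≤ 1 := by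
  rcases le_total s 1 with h | h
  · simp [angularCutoff_eq_zero h]
  · have hinv : 0 < s⁻¹ ∧ s⁻¹ ≤ 1 := ⟨inv_pos.mpr hs, inv_le_one_of_one_le₀ h⟩
    have hcube : s⁻¹ ^ 3 ≤ 1 := pow_le_one₀ hinv.1.le hinv.2
    rw [angularCutoff, max_eq_left h, abs_le]
    constructor <;> linarith [pow_pos hinv.1 3]

lemma abs_radialCutoffDeriv_div_add_angularCutoff_le (hs : 0 < s) :
    |radialCutoffDeriv s / s + angularCutoff s| ≤ 1 := by
  rcases le_total s 1 with h | h
  · simp [radialCutoffDeriv_eq_zero h, angularCutoff_eq_zero h]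
  · have hcube : 0 < s⁻¹ ^ 3 ∧ s⁻¹ ^ 3 ≤ 1 :=
      ⟨by positivity, pow_le_one₀ (by positivity) (inv_le_one_of_one_le₀ h)⟩
    have heq : radialCutoffDeriv s / s + angularCutoff s = 2 / 3 - 2 / 3 * s⁻¹ ^ 3 := by
      rw [radialCutoffDeriv, angularCutoff, max_eq_left h]
      field_simp
      ring
    rw [heq, abs_le]
    constructor <;> linarith

end Cutoff

section FluxNearOrigin

lemma eventually_neg_mul_sub_le_integral {φ : ℝ → ℝ} (hφ : Continuous φ) {x : ℝ} (hx : 0 ≤ φ x)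
    {ε : ℝ} (hε : 0 < ε) : ∀ᶠ y in 𝓝[>] x, -(ε * (y - x)) ≤ ∫ t in x..y, φ t := by
  obtain ⟨u, hxu, hu⟩ := mem_nhdsGE_iff_exists_Icc_subset.mp
    (nhdsWithin_le_nhds (hφ.continuousAt.eventually_const_lt (by linarith : -ε < φ x)) :
      {t | -ε < φ t} ∈ 𝓝[≥] x)
  filter_upwards [Ioc_mem_nhdsGT hxu] with y hy
  have hconst : ∫ _ in x..y, -ε ≤ ∫ t in x..y, φ t :=
    intervalIntegral.integral_mono_on hy.1.le intervalIntegrable_const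
      (hφ.intervalIntegrable x y) fun t ht => (hu ⟨ht.1, ht.2.trans hy.2⟩ : -ε < φ t).le
  rw [intervalIntegral.integral_const, smul_eq_mul] at hconst
  linarith

section RadialIntegrals

variable {g : ℝ × ℝ → ℝ} {C ρ a b : ℝ} (hg : ContinuousOn g rightHalfPlane)
  (hC : ∀ r ∈ Ioc 0 ρ, ∀ θ ∈ Icc a b, |g (r, θ)| ≤ C)
include hg hC

lemma intervalIntegrable_radial_slice {θ r₁ r₂ : ℝ} (hθ : θ ∈ Icc a b) (hr₁ : 0 ≤ r₁)
    (hr : r₁ ≤ r₂) (hr₂ : r₂ ≤ ρ) : IntervalIntegrable (fun s => g (s, θ)) volume r₁ r₂ := by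
  rw [intervalIntegrable_iff_integrableOn_Ioc_of_le hr]
  refine IntegrableOn.of_bound (C := C) measure_Ioc_lt_top
    (((continuousOn_radial_slice hg θ).mono fun s hs =>
      hr₁.trans_lt hs.1).aestronglyMeasurable measurableSet_Ioc) ?_
  exact (ae_restrict_iff' measurableSet_Ioc).mpr
    (Eventually.of_forall fun s hs => hC s ⟨hr₁.trans_lt hs.1, hs.2.trans hr₂⟩ θ hθ)

lemma continuousOn_integral_radial_slice {r : ℝ} (hr : r ∈ Icc 0 ρ) :
    ContinuousOn (fun θ => ∫ s in 0..r, g (s, θ)) (Icc a b) := by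
  have hmem : ∀ s ∈ uIoc 0 r, s ∈ Ioc 0 ρ := fun s hs => by
    rw [uIoc_of_le hr.1] at hs
    exact ⟨hs.1, hs.2.trans hr.2⟩
  refine fun θ _ => intervalIntegral.continuousWithinAt_of_dominated_interval
    (bound := fun _ => C) (Eventually.of_forall fun t => ?_) ?_ intervalIntegrable_const ?_
  · exact ((continuousOn_radial_slice hg t).mono fun s hs =>
      (hmem s hs).1).aestronglyMeasurable measurableSet_uIoc
  · filter_upwards [self_mem_nhdsWithin] with t ht
    exact Eventually.of_forall fun s hs => hC s (hmem s hs) t ht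
  · exact Eventually.of_forall fun s hs =>
      (continuous_angular_slice hg (hmem s hs).1).continuousWithinAt

end RadialIntegrals

/-- `C` bounds the partial derivatives of `V` that occur in the flux estimates near `r = 0`. -/
structure DerivBoundOn (V : ℝ × ℝ → ℝ) (C : ℝ) (S : Set (ℝ × ℝ)) : Prop where
  radial : ∀ p ∈ S, |radialDeriv V p| ≤ C
  angular : ∀ p ∈ S, |angularDeriv V p| ≤ C
  radial_radial : ∀ p ∈ S, |radialDeriv (radialDeriv V) p| ≤ C
  angular_angular : ∀ p ∈ S, |angularDeriv (angularDeriv V) p| ≤ C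

lemma exists_derivBoundOn {V : ℝ × ℝ → ℝ} (hV : ContDiff ℝ 2 V) {S : Set (ℝ × ℝ)}
    (hS : IsCompact S) : ∃ C, DerivBoundOn V C S := by
  have hr := contDiff_one_radialDeriv hV
  have hθ := contDiff_one_angularDeriv hV
  obtain ⟨C, hC⟩ := hS.exists_bound_of_continuousOn (hr.continuous.prodMk (hθ.continuous.prodMk
    ((continuous_radialDeriv hr).prodMk (continuous_angularDeriv hθ)))).continuousOn
  simp only [Prod.norm_def, sup_le_iff, Real.norm_eq_abs] at hC
  exact ⟨C, fun p hp => (hC p hp).1, fun p hp => (hC p hp).2.1, fun p hp => (hC p hp).2.2.1,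
    fun p hp => (hC p hp).2.2.2⟩

/-- Up to a constant, the flux of the cut-off gradient of `V` out of the sector of radius `r` and
angles `[a, θ]`, corrected by `3 C r θ` so that it increases with `θ` when `V` is subharmonic and
`C` bounds its derivatives. -/
noncomputable def netFlux (F V : ℝ × ℝ → ℝ) (C a r θ : ℝ) : ℝ :=
  radialFlux (fun p => radialCutoff (F p)) V r a θ + 3 * C * r * θ
    - angularFlux (fun p => angularCutoff (F p)) V θ 0 r

variable {F V : ℝ × ℝ → ℝ} {C ρ a b r θ : ℝ}

lemma radialFlux_add_radialFlux {G : ℝ × ℝ → ℝ} (hG : ContinuousOn G rightHalfPlane)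
    (hV : ContDiff ℝ 1 V) (hr : 0 < r) (a x y : ℝ) :
    radialFlux G V r a x + radialFlux G V r x y = radialFlux G V r a y := by
  have hcont := continuous_angular_slice (hG.mul (continuous_radialDeriv hV).continuousOn) hr
  exact intervalIntegral.integral_add_adjacent_intervals (hcont.intervalIntegrable a x)
    (hcont.intervalIntegrable x y)

lemma neg_three_mul_le_weightedDivergence_cutoff (hF : IsWarpingFunction F) {p : ℝ × ℝ}
    (hp : p ∈ rightHalfPlane) (hsub : 0 ≤ warpedLaplacian F V p) {S : Set (ℝ × ℝ)}
    (hC : DerivBoundOn V C S) (hpS : p ∈ S) :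
    -(3 * C) ≤ weightedDivergence radialCutoffDeriv radialCutoff angularCutoff F V p := by
  have hFp := hF.pos p hp
  have hlaplacian := mul_nonneg (mul_nonneg hFp.le (radialCutoffDeriv_nonneg (F p))) hsub
  have hradial := abs_mul (F p * radialCutoffDeriv (F p) - radialCutoff (F p)) _ ▸
    mul_le_mul (abs_mul_radialCutoffDeriv_sub_radialCutoff_le hFp) (hC.radial_radial p hpS)
      (abs_nonneg _) zero_le_two
  have hangular := abs_mul (radialCutoffDeriv (F p) / F p + angularCutoff (F p)) _ ▸
    mul_le_mul (abs_radialCutoffDeriv_div_add_angularCutoff_le hFp) (hC.angular_angular p hpS)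
      (abs_nonneg _) zero_le_one
  unfold weightedDivergence
  linarith [(abs_le.mp hradial).2, (abs_le.mp hangular).2]

lemma abs_angularCutoff_mul_angularDeriv_le (hF : IsWarpingFunction F)
    (hC : DerivBoundOn V C (Icc (0, a) (ρ, b))) :
    ∀ r ∈ Ioc 0 ρ, ∀ θ ∈ Icc a b, |angularCutoff (F (r, θ)) * angularDeriv V (r, θ)| ≤ C := by
  intro r hr θ hθ
  rw [abs_mul]
  exact (mul_le_of_le_one_left (abs_nonneg _) (abs_angularCutoff_le (hF.pos (r, θ) hr.1))).trans
    (hC.angular (r, θ) ⟨⟨hr.1.le, hθ.1⟩, hr.2, hθ.2⟩)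

lemma abs_angularFlux_cutoff_le (hF : IsWarpingFunction F)
    (hC : DerivBoundOn V C (Icc (0, a) (ρ, b))) (hr : r ∈ Ioc 0 ρ) (hθ : θ ∈ Icc a b) :
    |angularFlux (fun p => angularCutoff (F p)) V θ 0 r| ≤ C * r := by
  have hbound : ∀ s ∈ uIoc 0 r, ‖angularCutoff (F (s, θ)) * angularDeriv V (s, θ)‖ ≤ C :=
    fun s hs => by
      rw [uIoc_of_le hr.1.le] at hs
      exact abs_angularCutoff_mul_angularDeriv_le hF hC s ⟨hs.1, hs.2.trans hr.2⟩ θ hθ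
  have hle := intervalIntegral.norm_integral_le_of_norm_le_const hbound
  rw [sub_zero, abs_of_pos hr.1] at hle
  exact hle

section NetFlux

variable (hF : IsWarpingFunction F) (hV : ContDiff ℝ 2 V)
include hF hV

lemma netFlux_sub_netFlux (hr : 0 < r) (a x y : ℝ) :
    netFlux F V C a r y - netFlux F V C a r x =
      radialFlux (fun p => radialCutoff (F p)) V r x y + 3 * C * r * (y - x)
        - (angularFlux (fun p => angularCutoff (F p)) V y 0 r
          - angularFlux (fun p => angularCutoff (F p)) V x 0 r) := by
  rw [netFlux, netFlux, ← radialFlux_add_radialFlux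
    (hF.continuousOn_comp isFluxWeight_cutoff.continuousOn_radial) (hV.of_le one_le_two) hr a x y]
  ring

variable (hC : DerivBoundOn V C (Icc (0, a) (ρ, b)))
include hC

lemma continuousOn_netFlux (hr : r ∈ Ioc 0 ρ) : ContinuousOn (netFlux F V C a r) (Icc a b) := by
  have hradial : Continuous fun θ => radialFlux (fun p => radialCutoff (F p)) V r a θ :=
    intervalIntegral.continuous_primitive (fun x y => (continuous_angular_slice
      (isFluxWeight_cutoff.continuousOn_radial_mul_radialDeriv hF hV) hr.1).intervalIntegrable x y)
      a
  exact (hradial.continuousOn.add (by fun_prop)).sub (continuousOn_integral_radial_slice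
    (isFluxWeight_cutoff.continuousOn_angular_mul_angularDeriv hF hV)
    (abs_angularCutoff_mul_angularDeriv_le hF hC) ⟨hr.1.le, hr.2⟩)

lemma netFlux_sub_le_netFlux_sub (hsub : ∀ p ∈ rightHalfPlane, 0 ≤ warpedLaplacian F V p)
    {r₁ r₂ x y : ℝ} (hr₁ : 0 < r₁) (hr : r₁ ≤ r₂) (hr₂ : r₂ ≤ ρ) (hx : x ∈ Icc a b)
    (hy : y ∈ Icc a b) (hxy : x ≤ y) :
    netFlux F V C a r₁ y - netFlux F V C a r₁ x
      ≤ netFlux F V C a r₂ y - netFlux F V C a r₂ x := by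
  have hadd : ∀ θ ∈ Icc a b, angularFlux (fun p => angularCutoff (F p)) V θ 0 r₂ =
      angularFlux (fun p => angularCutoff (F p)) V θ 0 r₁
        + angularFlux (fun p => angularCutoff (F p)) V θ r₁ r₂ := fun θ hθ => by
    have hint := fun {s₁ s₂ : ℝ} => intervalIntegrable_radial_slice (r₁ := s₁) (r₂ := s₂)
      (isFluxWeight_cutoff.continuousOn_angular_mul_angularDeriv hF hV)
      (abs_angularCutoff_mul_angularDeriv_le hF hC) hθ
    exact (intervalIntegral.integral_add_adjacent_intervals (hint le_rfl hr₁.le (hr.trans hr₂))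
      (hint hr₁.le hr hr₂)).symm
  have harea : ∫ _ in Icc (r₁, x) (r₂, y), -(3 * C) = -(3 * C) * ((r₂ - r₁) * (y - x)) := by
    rw [setIntegral_const, smul_eq_mul, mul_comm, ← Icc_prod_Icc, Measure.volume_eq_prod,
      measureReal_prod_prod, Real.volume_real_Icc_of_le hr, Real.volume_real_Icc_of_le hxy]
  have hdivergence : ∫ _ in Icc (r₁, x) (r₂, y), -(3 * C) ≤ ∫ p in Icc (r₁, x) (r₂, y),
      weightedDivergence radialCutoffDeriv radialCutoff angularCutoff F V p :=
    setIntegral_mono_on (integrableOn_const isCompact_Icc.measure_lt_top.ne)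
      (isFluxWeight_cutoff.integrableOn_weightedDivergence hF hV hr₁) measurableSet_Icc
      fun p hp => neg_three_mul_le_weightedDivergence_cutoff hF (hr₁.trans_le hp.1.1)
        (hsub p (hr₁.trans_le hp.1.1)) hC
        ⟨⟨hr₁.le.trans hp.1.1, hx.1.trans hp.1.2⟩, hp.2.1.trans hr₂, hp.2.2.trans hy.2⟩
  rw [harea, isFluxWeight_cutoff.integral_weightedDivergence hF hV hr₁ hr hxy] at hdivergence
  rw [netFlux_sub_netFlux hF hV hr₁, netFlux_sub_netFlux hF hV (hr₁.trans_le hr), hadd x hx,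
    hadd y hy]
  linarith

lemma eventually_netFlux_sub_le {d x : ℝ} (hr : r ∈ Ioc 0 ρ) (hrd : r ≤ d) (hx : x ∈ Icc a b)
    (hxF : ∀ s ∈ Ioc 0 d, F (s, x) ≤ 1) {ε : ℝ} (hε : 0 < ε) :
    ∀ᶠ y in 𝓝[>] x, (∀ s ∈ Ioc 0 d, F (s, y) ≤ 1) →
      netFlux F V C a r x - ε * (y - x) ≤ netFlux F V C a r y := by
  have hzero : ∀ y, (∀ s ∈ Ioc 0 d, F (s, y) ≤ 1) →
      angularFlux (fun p => angularCutoff (F p)) V y 0 r = 0 := fun y hy =>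
    intervalIntegral.integral_zero_ae (Eventually.of_forall fun s hs => by
      rw [uIoc_of_le hr.1.le] at hs
      exact mul_eq_zero_of_left (angularCutoff_eq_zero (hy s ⟨hs.1, hs.2.trans hrd⟩)) _)
  have hC0 : 0 ≤ C :=
    (abs_nonneg _).trans (hC.radial (r, x) ⟨⟨hr.1.le, hx.1⟩, hr.2, hx.2⟩)
  filter_upwards [eventually_neg_mul_sub_le_integral (x := x) (continuous_angular_slice
    (isFluxWeight_cutoff.continuousOn_radial_mul_radialDeriv hF hV) hr.1)
    (by rw [radialCutoff_eq_zero (hxF r ⟨hr.1, hrd⟩), zero_mul]) hε, self_mem_nhdsWithin]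
    with y hflux hxy hy
  have hdiff := netFlux_sub_netFlux hF hV hr.1 (C := C) a x y
  rw [hzero x hxF, hzero y hy, sub_zero, sub_zero] at hdiff
  have hlinear : 0 ≤ 3 * C * r * (y - x) :=
    mul_nonneg (mul_nonneg (by positivity) hr.1.le) (sub_pos.mpr hxy).le
  unfold radialFlux at hdiff
  linarith

variable (hF1 : ∀ θ, ∀ᶠ r in 𝓝[>] 0, F (r, θ) ≤ 1)
  (hsub : ∀ p ∈ rightHalfPlane, 0 ≤ warpedLaplacian F V p)
include hF1 hsub

lemma monotoneOn_netFlux (hr : r ∈ Ioc 0 ρ) : MonotoneOn (netFlux F V C a r) (Icc a b) := by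
  have hρ : 0 < ρ := hr.1.trans_le hr.2
  have hδpos : ∀ n : ℕ, 0 < ρ / (n + 1) := fun n => by positivity
  have hδle : ∀ n : ℕ, ρ / (n + 1) ≤ ρ := fun n =>
    div_le_self hρ.le (le_add_of_nonneg_left n.cast_nonneg)
  refine monotoneOn_Icc_of_isClosed_cover (Φ := fun i : Ioc 0 ρ => netFlux F V C a i)
    (E := fun n : ℕ => {θ ∈ Icc a b | ∀ s ∈ Ioc 0 (ρ / (n + 1)), F (s, θ) ≤ 1})
    (δ := fun n => ⟨ρ / (n + 1), hδpos n, hδle n⟩) (fun n => ?_) (fun θ hθ => ?_)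
    (fun i => continuousOn_netFlux hF hV hC i.2) (fun x hx y hy hxy i j hij => ?_)
    (fun n i hi x hx ε hε => ?_) ⟨r, hr⟩
  · simp only [ofPred_and, ofPred_forall]
    exact isClosed_Icc.inter (isClosed_biInter fun s hs =>
      isClosed_le (continuous_angular_slice hF.continuousOn hs.1) continuous_const)
  · obtain ⟨η, hη, hsmall⟩ := mem_nhdsGT_iff_exists_Ioo_subset.mp (hF1 θ)
    obtain ⟨n, hn⟩ := exists_nat_one_div_lt (div_pos hη hρ)
    rw [lt_div_iff₀ hρ, one_div_mul_eq_div] at hn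
    exact mem_iUnion.mpr ⟨n, hθ, fun s hs => hsmall ⟨hs.1, hs.2.trans_lt hn⟩⟩
  · exact netFlux_sub_le_netFlux_sub hF hV hC hsub i.2.1 hij j.2.2 hx hy hxy
  · exact (eventually_netFlux_sub_le hF hV hC i.2 hi hx.1 hx.2 hε).mono fun y h hy => h hy.2

lemma neg_mul_le_radialFlux_cutoff (hab : a ≤ b) (hr : r ∈ Ioc 0 ρ) :
    -(C * (3 * (b - a) + 2)) * r ≤ radialFlux (fun p => radialCutoff (F p)) V r a b := by
  have hmono := monotoneOn_netFlux hF hV hC hF1 hsub hr (left_mem_Icc.mpr hab)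
    (right_mem_Icc.mpr hab) hab
  have hdiff := netFlux_sub_netFlux hF hV hr.1 (C := C) a a b
  have ha := abs_le.mp (abs_angularFlux_cutoff_le hF hC hr (left_mem_Icc.mpr hab))
  have hb := abs_le.mp (abs_angularFlux_cutoff_le hF hC hr (right_mem_Icc.mpr hab))
  linarith

end NetFlux

lemma tendsto_radialFlux_sub_cutoff (hF : IsWarpingFunction F) (hV : ContDiff ℝ 1 V)
    (hF0 : ∀ θ, Tendsto (fun r => F (r, θ)) (𝓝[>] 0) (𝓝 0)) (hab : a ≤ b) (hρ : 0 < ρ)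
    (hC : DerivBoundOn V C (Icc (0, a) (ρ, b))) :
    Tendsto (fun r => radialFlux (fun p => F p - radialCutoff (F p)) V r a b) (𝓝[>] 0) (𝓝 0) := by
  have hVr := continuous_radialDeriv hV
  have hG : ContinuousOn (fun p => F p - radialCutoff (F p)) rightHalfPlane :=
    hF.continuousOn.sub (hF.continuousOn_comp isFluxWeight_cutoff.continuousOn_radial)
  suffices hlim : Tendsto (fun r => radialFlux (fun p => F p - radialCutoff (F p)) V r a b) (𝓝[>] 0)
      (𝓝 (∫ _ in a..b, 0)) by rwa [intervalIntegral.integral_zero] at hlim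
  refine intervalIntegral.tendsto_integral_filter_of_dominated_convergence (fun _ => 2 * C)
    ?_ ?_ intervalIntegrable_const (Eventually.of_forall fun θ _ => ?_)
  · filter_upwards [self_mem_nhdsWithin] with r hr
    exact (continuous_angular_slice (hG.mul hVr.continuousOn) hr).aestronglyMeasurable
  · filter_upwards [Ioc_mem_nhdsGT hρ] with r hr
    refine Eventually.of_forall fun θ hθ => ?_
    rw [uIoc_of_le hab] at hθ
    rw [norm_mul]
    exact mul_le_mul (abs_sub_radialCutoff_le (hF.pos (r, θ) hr.1))
      (hC.radial (r, θ) ⟨⟨hr.1.le, hθ.1.le⟩, hr.2, hθ.2⟩) (norm_nonneg _) zero_le_two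
  · have hslice : Tendsto (fun r => radialDeriv V (r, θ)) (𝓝[>] 0) (𝓝 (radialDeriv V (0, θ))) :=
      tendsto_nhdsWithin_of_tendsto_nhds
        ((hVr.comp (by fun_prop : Continuous fun r : ℝ => (r, θ))).tendsto 0)
    refine (zero_mul (radialDeriv V (0, θ)) ▸ (hF0 θ).mul hslice).congr' ?_
    filter_upwards [(hF0 θ).eventually_le_const zero_lt_one] with r hr
    simp only [radialCutoff_eq_zero hr, sub_zero]

theorem eventually_neg_lt_radialFlux (hF : IsWarpingFunction F)
    (hF0 : ∀ θ, Tendsto (fun r => F (r, θ)) (𝓝[>] 0) (𝓝 0)) (hV : ContDiff ℝ 2 V)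
    (hsub : ∀ p ∈ rightHalfPlane, 0 ≤ warpedLaplacian F V p) (hab : a ≤ b) {c : ℝ} (hc : 0 < c) :
    ∀ᶠ r in 𝓝[>] 0, -c < radialFlux F V r a b := by
  obtain ⟨C, hC⟩ := exists_derivBoundOn hV (isCompact_Icc (a := ((0 : ℝ), a)) (b := (1, b)))
  have hlinear : Tendsto (fun r : ℝ => -(C * (3 * (b - a) + 2)) * r) (𝓝[>] 0) (𝓝 0) :=
    tendsto_nhdsWithin_of_tendsto_nhds (Continuous.tendsto' (by fun_prop) _ _ (mul_zero _))
  have hsum := hlinear.add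
    (tendsto_radialFlux_sub_cutoff hF (hV.of_le one_le_two) hF0 hab zero_lt_one hC)
  filter_upwards [hsum.eventually_const_lt (by linarith : -c < 0 + 0),
    Ioc_mem_nhdsGT zero_lt_one] with r hlt hr
  have hK := hF.continuousOn_comp isFluxWeight_cutoff.continuousOn_radial
  have hVr := (contDiff_one_radialDeriv hV).continuous.continuousOn (s := rightHalfPlane)
  have hsplit : radialFlux (fun p => F p - radialCutoff (F p)) V r a b
      = radialFlux F V r a b - radialFlux (fun p => radialCutoff (F p)) V r a b := by
    simp only [radialFlux, sub_mul]
    exact intervalIntegral.integral_sub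
      ((continuous_angular_slice (hF.continuousOn.mul hVr) hr.1).intervalIntegrable a b)
      ((continuous_angular_slice (hK.mul hVr) hr.1).intervalIntegrable a b)
  linarith [neg_mul_le_radialFlux_cutoff hF hV hC
    (fun θ => (hF0 θ).eventually_le_const zero_lt_one) hsub hab hr]

end FluxNearOrigin

section MaximumOverCircles

variable {F V : ℝ × ℝ → ℝ} {c r₁ r₂ m : ℝ}

lemma integral_mul_warpedLaplacian_of_periodic (hF : IsWarpingFunction F) (hV : ContDiff ℝ 2 V)
    (hFper : ∀ r, Function.Periodic (fun t => F (r, t)) c)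
    (hVper : ∀ r, Function.Periodic (fun t => V (r, t)) c) (hc : 0 ≤ c) (hr₁ : 0 < r₁)
    (hr : r₁ ≤ r₂) :
    ∫ p in Icc (r₁, 0) (r₂, c), F p * warpedLaplacian F V p
      = radialFlux F V r₂ 0 c - radialFlux F V r₁ 0 c := by
  have hangular : angularFlux (fun p => -(F p)⁻¹) V c r₁ r₂
      = angularFlux (fun p => -(F p)⁻¹) V 0 r₁ r₂ := by
    have hVθ := fun r => (periodic_angularDeriv (hV.differentiable two_ne_zero) hVper r).eq
    simp only [angularFlux, fun r => (hFper r).eq, hVθ]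
  have hdivergence := isFluxWeight_id.integral_weightedDivergence hF hV hr₁ hr hc
  simpa only [weightedDivergence_id, hangular, sub_self, sub_zero] using hdivergence

lemma eq_of_radialDeriv_eq_zero {θ : ℝ} (hV : Differentiable ℝ V) (hr : r₁ ≤ r₂)
    (hzero : ∀ s ∈ Icc r₁ r₂, radialDeriv V (s, θ) = 0) : V (r₂, θ) = V (r₁, θ) :=
  constant_of_has_deriv_right_zero (f := fun s => V (s, θ))
    (hV.continuous.comp (by fun_prop)).continuousOn
    (fun s hs => ((hasDerivAt_radialDeriv (hV (s, θ))).congr_deriv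
      (hzero s (Ico_subset_Icc_self hs))).hasDerivWithinAt) r₂ (right_mem_Icc.mpr hr)

lemma radialDeriv_max_sub_pow_three (hV : Differentiable ℝ V) (m : ℝ) (p : ℝ × ℝ) :
    radialDeriv (fun q => max (V q - m) 0 ^ 3) p = 3 * max (V p - m) 0 ^ 2 * radialDeriv V p :=
  radialDeriv_comp ((hasDerivAt_max_sub_pow m (V p) 1).congr_deriv (by norm_num)) (hV p)

lemma warpedLaplacian_max_sub_pow_three (hV : ContDiff ℝ 2 V) (m : ℝ) (p : ℝ × ℝ) :
    warpedLaplacian F (fun q => max (V q - m) 0 ^ 3) p =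
      3 * max (V p - m) 0 ^ 2 * warpedLaplacian F V p
        + 6 * max (V p - m) 0 * (radialDeriv V p ^ 2 + angularDeriv V p ^ 2 / F p ^ 2) :=
  warpedLaplacian_comp (Ψ' := fun t => 3 * max (t - m) 0 ^ 2) (Ψ'' := fun t => 6 * max (t - m) 0)
    hV (fun t => (hasDerivAt_max_sub_pow m t 1).congr_deriv (by norm_num))
    (fun t => ((hasDerivAt_max_sub_pow m t 0).const_mul 3).congr_deriv (by
      push_cast
      ring)) p

lemma warpedLaplacian_max_sub_pow_three_nonneg (hV : ContDiff ℝ 2 V) {p : ℝ × ℝ}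
    (hsub : 0 ≤ warpedLaplacian F V p) (m : ℝ) :
    0 ≤ warpedLaplacian F (fun q => max (V q - m) 0 ^ 3) p := by
  rw [warpedLaplacian_max_sub_pow_three hV]
  positivity

lemma radialDeriv_max_sub_pow_three_eq_zero (hV : ContDiff ℝ 2 V) {p : ℝ × ℝ}
    (hsub : 0 ≤ warpedLaplacian F V p)
    (hharmonic : warpedLaplacian F (fun q => max (V q - m) 0 ^ 3) p = 0) :
    radialDeriv (fun q => max (V q - m) 0 ^ 3) p = 0 := by
  rw [warpedLaplacian_max_sub_pow_three hV, add_eq_zero_iff_of_nonneg (by positivity)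
    (by positivity)] at hharmonic
  rw [radialDeriv_max_sub_pow_three (hV.differentiable two_ne_zero)]
  rcases mul_eq_zero.mp hharmonic.2 with hmax | hgrad
  · rw [(mul_eq_zero.mp hmax).resolve_left (by norm_num)]
    ring
  · rw [add_eq_zero_iff_of_nonneg (sq_nonneg _) (by positivity), sq_eq_zero_iff] at hgrad
    rw [hgrad.1, mul_zero]

variable (hF : IsWarpingFunction F)
  (hFper : ∀ r, Function.Periodic (fun t => F (r, t)) c)
  (hF0 : ∀ θ, Tendsto (fun r => F (r, θ)) (𝓝[>] 0) (𝓝 0)) (hV : ContDiff ℝ 2 V)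
  (hVper : ∀ r, Function.Periodic (fun t => V (r, t)) c)
  (hsub : ∀ p ∈ rightHalfPlane, 0 ≤ warpedLaplacian F V p)
include hF hFper hF0 hV hVper hsub

theorem radialFlux_nonneg (hc : 0 ≤ c) {r : ℝ} (hr : 0 < r) : 0 ≤ radialFlux F V r 0 c := by
  refine le_of_forall_pos_lt_add fun ε hε => ?_
  obtain ⟨s, hlt, hs⟩ := ((eventually_neg_lt_radialFlux hF hF0 hV hsub hc hε).and
    (Ioc_mem_nhdsGT hr)).exists
  have hmono : 0 ≤ ∫ p in Icc (s, 0) (r, c), F p * warpedLaplacian F V p :=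
    setIntegral_nonneg measurableSet_Icc fun p hp =>
      have hp0 : p ∈ rightHalfPlane := hs.1.trans_le hp.1.1
      mul_nonneg (hF.pos p hp0).le (hsub p hp0)
  rw [integral_mul_warpedLaplacian_of_periodic hF hV hFper hVper hc hs.1 hs.2] at hmono
  linarith

lemma eqOn_warpedLaplacian_zero_of_radialFlux_nonpos (hc : 0 < c) (hr₁ : 0 < r₁) (hr : r₁ < r₂)
    (hflux : radialFlux F V r₂ 0 c ≤ 0) :
    EqOn (warpedLaplacian F V) 0 (Icc (r₁, 0) (r₂, c)) := by
  have hmem : Icc (r₁, 0) (r₂, c) ⊆ rightHalfPlane := Icc_subset_rightHalfPlane hr₁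
  have hregular : Icc (r₁, 0) (r₂, c) ⊆ closure (interior (Icc (r₁, 0) (r₂, c))) := by
    rw [← Icc_prod_Icc, interior_prod_eq, closure_prod_eq, interior_Icc, interior_Icc,
      closure_Ioo hr.ne, closure_Ioo hc.ne]
  have hint : ∫ p in Icc (r₁, 0) (r₂, c), F p * warpedLaplacian F V p ≤ 0 := by
    rw [integral_mul_warpedLaplacian_of_periodic hF hV hFper hVper hc.le hr₁ hr.le]
    linarith [radialFlux_nonneg hF hFper hF0 hV hVper hsub hc.le hr₁]
  have hzero := eqOn_zero_of_setIntegral_nonpos isCompact_Icc hregular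
    ((hF.continuousOn.mul (hF.continuousOn_warpedLaplacian hV)).mono hmem)
    (fun p hp => mul_nonneg (hF.pos p (hmem hp)).le (hsub p (hmem hp))) hint
  exact fun p hp => (mul_eq_zero.mp (hzero hp)).resolve_left (hF.pos p (hmem hp)).ne'

theorem le_of_forall_le_on_circle (hc : 0 < c) (hr₁ : 0 < r₁) (hr : r₁ < r₂)
    (hm : ∀ θ, V (r₂, θ) ≤ m) (θ : ℝ) : V (r₁, θ) ≤ m := by
  have hVd : Differentiable ℝ V := hV.differentiable two_ne_zero
  let W : ℝ × ℝ → ℝ := fun p => max (V p - m) 0 ^ 3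
  have hW : ContDiff ℝ 2 W := (contDiff_max_sub_pow m 2).comp hV
  have hWper : ∀ r, Function.Periodic (fun t => W (r, t)) c := fun r =>
    (hVper r).comp fun v => max (v - m) 0 ^ 3
  have hWouter : ∀ t, max (V (r₂, t) - m) 0 = 0 := fun t => max_eq_right (sub_nonpos.mpr (hm t))
  have hflux : radialFlux F W r₂ 0 c = 0 := by
    simp [radialFlux, W, radialDeriv_max_sub_pow_three hVd, hWouter]
  have hharmonic : EqOn (warpedLaplacian F W) 0 (Icc (r₁, 0) (r₂, c)) :=
    eqOn_warpedLaplacian_zero_of_radialFlux_nonpos hF hFper hF0 hW hWper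
      (fun p hp => warpedLaplacian_max_sub_pow_three_nonneg hV (hsub p hp) m) hc hr₁ hr hflux.le
  obtain ⟨t, ht, hVt⟩ := (hVper r₁).exists_mem_Ico₀ hc θ
  have hconst : W (r₂, t) = W (r₁, t) :=
    eq_of_radialDeriv_eq_zero (hW.differentiable two_ne_zero) hr.le fun s hs =>
      radialDeriv_max_sub_pow_three_eq_zero hV (hsub (s, t) (hr₁.trans_le hs.1))
        (hharmonic ⟨⟨hs.1, ht.1⟩, hs.2, ht.2.le⟩)
  have hWinner : max (V (r₁, t) - m) 0 ^ 3 = 0 :=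
    hconst.symm.trans (by simp only [W, hWouter, zero_pow three_ne_zero])
  have hle := max_eq_right_iff.mp (pow_eq_zero_iff three_ne_zero |>.mp hWinner)
  exact hVt.trans_le (sub_nonpos.mp hle)

end MaximumOverCircles

section Comparison

variable {F V : ℝ × ℝ → ℝ} {c r₁ r₂ m b : ℝ}

lemma exists_forall_sub_le_of_periodic (hV : Continuous V) (hc : 0 < c)
    (hVper : ∀ r, Function.Periodic (fun t => V (r, t)) c) {P : ℝ → ℝ}
    (hP : ContinuousOn P (Icc r₁ r₂)) (hr : r₁ ≤ r₂) :
    ∃ s ∈ Icc r₁ r₂, ∃ t, ∀ s' ∈ Icc r₁ r₂, ∀ t', V (s', t') - P s' ≤ V (s, t) - P s := by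
  obtain ⟨⟨s, t⟩, ⟨hs, -⟩, hmax⟩ := (isCompact_Icc.prod isCompact_Icc).exists_isMaxOn
    (s := Icc r₁ r₂ ×ˢ Icc 0 c) (f := fun p : ℝ × ℝ => V p - P p.1)
    ⟨(r₁, 0), left_mem_Icc.mpr hr, left_mem_Icc.mpr hc.le⟩
    (hV.continuousOn.sub (hP.comp continuousOn_fst fun p hp => hp.1))
  refine ⟨s, hs, t, fun s' hs' t' => ?_⟩
  obtain ⟨y, hy, hVy⟩ := (hVper s').exists_mem_Ico₀ hc t'
  exact hVy ▸ hmax ⟨hs', hy.1, hy.2.le⟩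

lemma warpedLaplacian_le_of_isLocalMax_sub (hV : ContDiff ℝ 2 V) {P P' : ℝ → ℝ} {P'' s t : ℝ}
    (hP : ∀ᶠ y in 𝓝 s, HasDerivAt P (P' y) y) (hP' : HasDerivAt P' P'' s)
    (hradial : IsLocalMax (fun y => V (y, t) - P y) s)
    (hangular : IsLocalMax (fun y => V (s, y)) t) :
    warpedLaplacian F V (s, t) ≤ P'' + radialDeriv F (s, t) / F (s, t) * P' s := by
  have hVd : Differentiable ℝ V := hV.differentiable two_ne_zero
  have hVr := (contDiff_one_radialDeriv hV).differentiable one_ne_zero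
  have hVθ := (contDiff_one_angularDeriv hV).differentiable one_ne_zero
  have hderiv : ∀ᶠ y in 𝓝 s, HasDerivAt (fun y => V (y, t) - P y)
      (radialDeriv V (y, t) - P' y) y :=
    hP.mono fun y hy => (hasDerivAt_radialDeriv (hVd (y, t))).sub hy
  have hr : radialDeriv V (s, t) = P' s :=
    sub_eq_zero.mp (hradial.hasDerivAt_eq_zero hderiv.self_of_nhds)
  have hrr : radialDeriv (radialDeriv V) (s, t) ≤ P'' :=
    sub_nonpos.mp (nonpos_of_isLocalMax_of_hasDerivAt_hasDerivAt hradial hderiv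
      ((hasDerivAt_radialDeriv (hVr (s, t))).sub hP'))
  have hθ : angularDeriv V (s, t) = 0 :=
    hangular.hasDerivAt_eq_zero (hasDerivAt_angularDeriv (hVd (s, t)))
  have hθθ : angularDeriv (angularDeriv V) (s, t) ≤ 0 :=
    nonpos_of_isLocalMax_of_hasDerivAt_hasDerivAt hangular
      (Eventually.of_forall fun y => hasDerivAt_angularDeriv (hVd (s, y)))
      (hasDerivAt_angularDeriv (hVθ (s, t)))
  rw [warpedLaplacian, hr, hθ, mul_zero, sub_zero]
  linarith [div_nonpos_of_nonpos_of_nonneg hθθ (sq_nonneg (F (s, t)))]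

lemma log_log_lt_log_log {r₁ r₂ : ℝ} (hr₁ : 1 < r₁) (hr : r₁ < r₂) :
    log (log r₁) < log (log r₂) :=
  log_lt_log (log_pos hr₁) (log_lt_log (zero_lt_one.trans hr₁) hr)

lemma add_slope_mul_log_log_sub {x y r₁ r r₂ : ℝ} (hr₁ : 1 < r₁) (hr : 1 < r) (hr₁₂ : r₁ < r₂) :
    x + (y - x) / (log (log r₂) - log (log r₁)) * (log (log r) - log (log r₁))
      = (x * log (log r₂ / log r) + y * log (log r / log r₁)) / log (log r₂ / log r₁) := by
  have hlog₁ : 0 < log r₁ := log_pos hr₁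
  have hlog : log r ≠ 0 := (log_pos hr).ne'
  have hlog₂ : log r₂ ≠ 0 := (log_pos (hr₁.trans hr₁₂)).ne'
  have hne : log (log r₂) - log (log r₁) ≠ 0 :=
    (sub_pos.mpr (log_log_lt_log_log hr₁ hr₁₂)).ne'
  rw [log_div hlog₂ hlog, log_div hlog hlog₁.ne', log_div hlog₂ hlog₁.ne']
  field_simp
  ring

lemma hasDerivAt_log_log {s : ℝ} (hs : 1 < s) :
    HasDerivAt (fun x => log (log x)) (s * log s)⁻¹ s :=
  ((hasDerivAt_log (zero_lt_one.trans hs).ne').log (log_pos hs).ne').congr_deriv (by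
    rw [mul_inv, div_eq_mul_inv])

lemma hasDerivAt_inv_mul_log {s : ℝ} (hs : 1 < s) :
    HasDerivAt (fun x => (x * log x)⁻¹) (-((1 + log s) / (s * log s) * (s * log s)⁻¹)) s := by
  have hs0 : s ≠ 0 := (zero_lt_one.trans hs).ne'
  have hlog : log s ≠ 0 := (log_pos hs).ne'
  refine (((hasDerivAt_id s).mul (hasDerivAt_log hs0)).inv
    (mul_ne_zero hs0 hlog)).congr_deriv ?_
  simp only [id, Pi.mul_apply]
  field_simp
  ring

variable (hV : ContDiff ℝ 2 V) (hc : 0 < c) (hVper : ∀ r, Function.Periodic (fun t => V (r, t)) c)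
  (hsub : ∀ r ∈ Ioo r₁ r₂, ∀ θ, 0 ≤ warpedLaplacian F V (r, θ))
include hV hc hVper hsub

theorem le_of_radial_strict_supersolution {P P' P'' : ℝ → ℝ} (hPc : ContinuousOn P (Icc r₁ r₂))
    (hP : ∀ r ∈ Ioo r₁ r₂, HasDerivAt P (P' r) r)
    (hP' : ∀ r ∈ Ioo r₁ r₂, HasDerivAt P' (P'' r) r)
    (hneg : ∀ r ∈ Ioo r₁ r₂, ∀ θ, P'' r + radialDeriv F (r, θ) / F (r, θ) * P' r < 0)
    (hinner : ∀ θ, V (r₁, θ) ≤ P r₁) (houter : ∀ θ, V (r₂, θ) ≤ P r₂)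
    {r : ℝ} (hr : r ∈ Icc r₁ r₂) (θ : ℝ) : V (r, θ) ≤ P r := by
  obtain ⟨s, hs, t, hmax⟩ :=
    exists_forall_sub_le_of_periodic hV.continuous hc hVper hPc (hr.1.trans hr.2)
  suffices h : V (s, t) ≤ P s by linarith [hmax r hr θ]
  rcases hs.1.eq_or_lt with rfl | h₁
  · exact hinner t
  rcases hs.2.eq_or_lt with rfl | h₂
  · exact houter t
  have hsmem : s ∈ Ioo r₁ r₂ := ⟨h₁, h₂⟩
  have hnhds : Ioo r₁ r₂ ∈ 𝓝 s := Ioo_mem_nhds h₁ h₂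
  have hle := warpedLaplacian_le_of_isLocalMax_sub (F := F) hV
    (eventually_of_mem hnhds hP) (hP' s hsmem)
    (eventually_of_mem hnhds fun y hy => hmax y (Ioo_subset_Icc_self hy) t)
    (Eventually.of_forall fun y => sub_le_sub_iff_right (P s) |>.mp (hmax s hs y))
  exact absurd (hle.trans_lt (hneg s hsmem t)) (hsub s hsmem t).not_gt

theorem le_of_radial_supersolution {h h' h'' : ℝ → ℝ} (hhc : ContinuousOn h (Icc r₁ r₂))
    (hh : ∀ r ∈ Ioo r₁ r₂, HasDerivAt h (h' r) r)
    (hh' : ∀ r ∈ Ioo r₁ r₂, HasDerivAt h' (h'' r) r) (hpos : ∀ r ∈ Ioo r₁ r₂, 0 < h' r)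
    (hsuper : ∀ r ∈ Ioo r₁ r₂, ∀ θ, h'' r + radialDeriv F (r, θ) / F (r, θ) * h' r ≤ 0)
    (hb : 0 ≤ b) (hinner : ∀ θ, V (r₁, θ) ≤ m) (houter : ∀ θ, V (r₂, θ) ≤ m + b * (h r₂ - h r₁))
    {r : ℝ} (hr : r ∈ Icc r₁ r₂) (θ : ℝ) : V (r, θ) ≤ m + b * (h r - h r₁) := by
  have hmono : MonotoneOn h (Icc r₁ r₂) := by
    refine monotoneOn_of_hasDerivWithinAt_nonneg (f' := h') (convex_Icc r₁ r₂) hhc ?_ ?_ <;>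
      rw [interior_Icc]
    · exact fun s hs => (hh s hs).hasDerivWithinAt
    · exact fun s hs => (hpos s hs).le
  -- The concave quadratic in `h` turns `≤ 0` into `< 0` and keeps the slope nonnegative.
  have hperturbed : ∀ δ > 0, V (r, θ)
      ≤ m + b * (h r - h r₁) + δ * ((h r₂ - h r₁) ^ 2 - (h r₂ - h r) ^ 2) := by
    intro δ hδ
    refine le_of_radial_strict_supersolution hV hc hVper hsub
      (P := fun s => m + b * (h s - h r₁) + δ * ((h r₂ - h r₁) ^ 2 - (h r₂ - h s) ^ 2))
      (P' := fun s => (b + 2 * δ * (h r₂ - h s)) * h' s)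
      (P'' := fun s => 2 * δ * -h' s * h' s + (b + 2 * δ * (h r₂ - h s)) * h'' s)
      (by fun_prop) (fun s hs => ?_) (fun s hs => ?_) (fun s hs t => ?_) (fun t => ?_)
      (fun t => ?_) hr θ
    · exact ((((hh s hs).sub_const (h r₁)).const_mul b).const_add m |>.add
        (((((hh s hs).const_sub (h r₂)).pow 2).const_sub ((h r₂ - h r₁) ^ 2)).const_mul δ)
        ).congr_deriv (by push_cast; ring)
    · exact ((((hh s hs).const_sub (h r₂)).const_mul (2 * δ)).const_add b).mul (hh' s hs)
    · have hslope : 0 ≤ b + 2 * δ * (h r₂ - h s) := add_nonneg hb (mul_nonneg (by positivity)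
        (sub_nonneg.mpr (hmono (Ioo_subset_Icc_self hs)
          (right_mem_Icc.mpr (hs.1.trans hs.2).le) hs.2.le)))
      have hstrict : 0 < 2 * δ * (h' s * h' s) :=
        mul_pos (by positivity) (mul_pos (hpos s hs) (hpos s hs))
      linarith [mul_nonpos_of_nonneg_of_nonpos hslope (hsuper s hs t)]
    · simpa using hinner t
    · have hbonus := mul_nonneg hδ.le (sq_nonneg (h r₂ - h r₁))
      simpa using (houter t).trans (le_add_of_nonneg_right hbonus)
  refine ge_of_tendsto (tendsto_nhdsWithin_of_tendsto_nhds (s := Ioi 0)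
    (Continuous.tendsto' (by fun_prop) 0 _ (by rw [zero_mul, add_zero])))
    (eventually_mem_nhdsWithin.mono hperturbed)

theorem le_add_mul_log_log_sub (hr₁ : 1 < r₁)
    (hmean : ∀ r ∈ Ioo r₁ r₂, ∀ θ,
      radialDeriv F (r, θ) / F (r, θ) ≤ (1 + log r) / (r * log r))
    (hb : 0 ≤ b) (hinner : ∀ θ, V (r₁, θ) ≤ m)
    (houter : ∀ θ, V (r₂, θ) ≤ m + b * (log (log r₂) - log (log r₁)))
    {r : ℝ} (hr : r ∈ Icc r₁ r₂) (θ : ℝ) :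
    V (r, θ) ≤ m + b * (log (log r) - log (log r₁)) := by
  have hpos : ∀ s ∈ Ioo r₁ r₂, 0 < (s * log s)⁻¹ := fun s hs =>
    inv_pos.mpr (mul_pos (zero_lt_one.trans (hr₁.trans hs.1)) (log_pos (hr₁.trans hs.1)))
  refine le_of_radial_supersolution hV hc hVper hsub
    (fun s hs => (hasDerivAt_log_log (hr₁.trans_le hs.1)).continuousAt.continuousWithinAt)
    (fun s hs => hasDerivAt_log_log (hr₁.trans hs.1))
    (fun s hs => hasDerivAt_inv_mul_log (hr₁.trans hs.1)) hpos (fun s hs t => ?_) hb hinner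
    houter hr θ
  rw [neg_add_eq_sub]
  exact sub_nonpos.mpr (mul_le_mul_of_nonneg_right (hmean s hs t) (hpos s hs).le)

theorem le_log_log_interpolation (hr₁ : 1 < r₁)
    (hmean : ∀ r ∈ Ioo r₁ r₂, ∀ θ,
      radialDeriv F (r, θ) / F (r, θ) ≤ (1 + log r) / (r * log r))
    {m₁ m₂ : ℝ} (hm : m₁ ≤ m₂) (hinner : ∀ θ, V (r₁, θ) ≤ m₁) (houter : ∀ θ, V (r₂, θ) ≤ m₂)
    {r : ℝ} (hr : r ∈ Ioo r₁ r₂) (θ : ℝ) :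
    V (r, θ)
      ≤ (m₁ * log (log r₂ / log r) + m₂ * log (log r / log r₁)) / log (log r₂ / log r₁) := by
  have hr₁₂ : r₁ < r₂ := hr.1.trans hr.2
  have hgap : 0 < log (log r₂) - log (log r₁) := sub_pos.mpr (log_log_lt_log_log hr₁ hr₁₂)
  rw [← add_slope_mul_log_log_sub hr₁ (hr₁.trans hr.1) hr₁₂]
  refine le_add_mul_log_log_sub hV hc hVper hsub hr₁ hmean
    (div_nonneg (sub_nonneg.mpr hm) hgap.le) hinner (fun t => ?_) (Ioo_subset_Icc_self hr) θ
  rw [div_mul_cancel₀ _ hgap.ne', add_sub_cancel]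
  exact houter t

end Comparison

section MaximumOnCircles

variable {f : ℝ → ℝ → ℝ} {u : ℝ × ℝ → ℝ}

lemma contDiff_comp_polar (hu : ContDiff ℝ 2 u) :
    ContDiff ℝ 2 fun p : ℝ × ℝ => u (p.1 * cos p.2, p.1 * sin p.2) :=
  hu.comp ((contDiff_fst.mul contDiff_snd.cos).prodMk (contDiff_fst.mul contDiff_snd.sin))

lemma periodic_comp_polar (u : ℝ × ℝ → ℝ) (r : ℝ) :
    Function.Periodic (fun θ => u (r * cos θ, r * sin θ)) (2 * π) := fun θ => by
  simp only [cos_add_two_pi, sin_add_two_pi]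

lemma polarLaplacian_eq_warpedLaplacian {r θ : ℝ}
    (hf : DifferentiableAt ℝ (fun p : ℝ × ℝ => f p.1 p.2) (r, θ)) (hu : ContDiff ℝ 2 u) :
    polarLaplacian f u r θ = warpedLaplacian (fun p => f p.1 p.2)
      (fun p => u (p.1 * cos p.2, p.1 * sin p.2)) (r, θ) := by
  set V : ℝ × ℝ → ℝ := fun p => u (p.1 * cos p.2, p.1 * sin p.2)
  have hV : ContDiff ℝ 2 V := contDiff_comp_polar hu
  have hVd : Differentiable ℝ V := hV.differentiable two_ne_zero
  have hVr := (contDiff_one_radialDeriv hV).differentiable one_ne_zero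
  have hVθ := (contDiff_one_angularDeriv hV).differentiable one_ne_zero
  have hr : deriv (fun s => u (s * cos θ, s * sin θ)) = fun s => radialDeriv V (s, θ) :=
    funext fun s => (hasDerivAt_radialDeriv (hVd (s, θ))).deriv
  have hθ : deriv (fun t => u (r * cos t, r * sin t)) = fun t => angularDeriv V (r, t) :=
    funext fun t => (hasDerivAt_angularDeriv (hVd (r, t))).deriv
  rw [polarLaplacian, warpedLaplacian, hr, hθ, (hasDerivAt_radialDeriv (hVr (r, θ))).deriv,
    (hasDerivAt_angularDeriv (hVθ (r, θ))).deriv, (hasDerivAt_radialDeriv hf).deriv,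
    (hasDerivAt_angularDeriv hf).deriv]
  ring

lemma le_Mmax (hu : Continuous u) (r θ : ℝ) : u (r * cos θ, r * sin θ) ≤ Mmax u r := by
  obtain ⟨y, hy, hyu⟩ := (periodic_comp_polar u r).exists_mem_Ico₀ two_pi_pos θ
  have hcont : Continuous fun t => u (r * cos t, r * sin t) := by fun_prop
  have hbdd : BddAbove ((fun t => u (r * cos t, r * sin t)) '' Ico 0 (2 * π)) :=
    (isCompact_Icc.image hcont).bddAbove.mono (image_mono Ico_subset_Icc_self)
  exact hyu.trans_le (le_csSup hbdd (mem_image_of_mem _ hy))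

lemma Mmax_le {r m : ℝ} (h : ∀ θ, u (r * cos θ, r * sin θ) ≤ m) : Mmax u r ≤ m :=
  csSup_le ((nonempty_Ico.mpr two_pi_pos).image _) (forall_mem_image.mpr fun θ _ => h θ)

end MaximumOnCircles

theorem hadamard_three_circles_loglog_general (f : ℝ → ℝ → ℝ)
    (hf : ContDiffOn ℝ 1 (fun p : ℝ × ℝ => f p.1 p.2) {p | 0 < p.1})
    (hf_pos : ∀ r θ, 0 < r → 0 < f r θ) (hf_per : ∀ r θ, f r (θ + 2 * π) = f r θ)
    (hf_lim0 : ∀ θ, Tendsto (fun r => f r θ) (𝓝[>] 0) (𝓝 0))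
    (r₁ r₂ : ℝ) (hr₁ : 1 < r₁)
    (hmean : ∀ r ∈ Ioo r₁ r₂, ∀ θ,
      deriv (fun s => f s θ) r / f r θ ≤ (1 + log r) / (r * log r))
    (u : ℝ × ℝ → ℝ) (hu : ContDiff ℝ 2 u)
    (hsub : ∀ r θ, 0 < r → 0 ≤ polarLaplacian f u r θ) (r : ℝ) (hr : r ∈ Ioo r₁ r₂) :
    Mmax u r ≤ (Mmax u r₁ * log (log r₂ / log r) + Mmax u r₂ * log (log r / log r₁)) /
      log (log r₂ / log r₁) := by
  have hF : IsWarpingFunction fun p => f p.1 p.2 := ⟨hf, fun p hp => hf_pos p.1 p.2 hp⟩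
  have hFd : ∀ p ∈ rightHalfPlane, DifferentiableAt ℝ (fun p : ℝ × ℝ => f p.1 p.2) p :=
    fun _ => hF.differentiableAt
  have hr₁0 : 0 < r₁ := zero_lt_one.trans hr₁
  have hV := contDiff_comp_polar hu
  have hVsub := fun p hp =>
    (hsub p.1 p.2 hp).trans_eq (polarLaplacian_eq_warpedLaplacian (hFd p hp) hu)
  have hM : Mmax u r₁ ≤ Mmax u r₂ := Mmax_le (le_of_forall_le_on_circle hF hf_per hf_lim0 hV
    (periodic_comp_polar u) hVsub two_pi_pos hr₁0 (hr.1.trans hr.2)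
    (le_Mmax hu.continuous r₂))
  refine Mmax_le (le_log_log_interpolation hV two_pi_pos (periodic_comp_polar u)
    (fun s hs t => hVsub (s, t) (hr₁0.trans hs.1)) hr₁ (fun s hs t => ?_) hM
    (le_Mmax hu.continuous r₁) (le_Mmax hu.continuous r₂) hr)
  exact (hasDerivAt_radialDeriv (hFd (s, t) (hr₁0.trans hs.1))).deriv ▸ hmean s hs t

/-- Hadamard's three-circles theorem in log-log scale: if the mean curvature of the
circles satisfies `f_r/f ≤ (1 + log r)/(r log r)` for `r ∈ (r₁, r₂)` (with `1 < r₁ < r₂`)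
then for any subharmonic `u` and `r₁ < r < r₂`,
`M_r ≤ (M_{r₁} log(log r₂/log r) + M_{r₂} log(log r/log r₁)) / log(log r₂/log r₁)`. -/
theorem hadamard_three_circles_loglog (f : ℝ → ℝ → ℝ)
    (hf_smooth : ContDiffOn ℝ (⊤ : ℕ∞) (fun p : ℝ × ℝ => f p.1 p.2) {p : ℝ × ℝ | 0 < p.1})
    (hf_pos : ∀ r θ, 0 < r → 0 < f r θ)
    (hf_per : ∀ r θ, f r (θ + 2 * Real.pi) = f r θ)
    (hf_lim0 : ∀ θ, Tendsto (fun r => f r θ) (nhdsWithin 0 (Set.Ioi 0)) (nhds 0))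
    (hf_lim1 : ∀ θ, Tendsto (fun r => deriv (fun s => f s θ) r)
      (nhdsWithin 0 (Set.Ioi 0)) (nhds 1))
    (r₁ r₂ : ℝ) (hr₁ : 1 < r₁) (hr₁₂ : r₁ < r₂)
    (hmean : ∀ r ∈ Set.Ioo r₁ r₂, ∀ θ : ℝ,
      deriv (fun s => f s θ) r / f r θ ≤ (1 + Real.log r) / (r * Real.log r))
    (u : ℝ × ℝ → ℝ) (hu : ContDiff ℝ 2 u)
    (hsub : ∀ r θ, 0 < r → 0 ≤ polarLaplacian f u r θ) :
    ∀ r : ℝ, r₁ < r → r < r₂ →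
      Mmax u r ≤
        (Mmax u r₁ * Real.log (Real.log r₂ / Real.log r) +
          Mmax u r₂ * Real.log (Real.log r / Real.log r₁)) /
            Real.log (Real.log r₂ / Real.log r₁) := by
  exact fun r hr hr' => hadamard_three_circles_loglog_general f
    (hf_smooth.of_le (by exact_mod_cast le_top)) hf_pos hf_per hf_lim0 r₁ r₂ hr₁ hmean u hu hsub r
    ⟨hr, hr'⟩
end

section
/- Let Ω ⊆ ℝ² be open and let u : Ω → ℝ be a smooth harmonic function (Δu = u_xx + u_yy = 0 on Ω). Then on Ω, Δ log(1 + ‖∇u‖²) = 2 ‖Hess u‖² / (1 + ‖∇u‖²)², where ‖∇u‖² = u_x² + u_y² and ‖Hess u‖² = u_xx² + 2 u_xy² + u_yy² is the squared Frobenius norm of the matrix of second partial derivatives. -/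
open Real Set

/-- Partial derivative in the first (`x`) variable of a function on `ℝ²`. -/
noncomputable def pdx (w : ℝ × ℝ → ℝ) (p : ℝ × ℝ) : ℝ :=
  deriv (fun s => w (s, p.2)) p.1

/-- Partial derivative in the second (`y`) variable of a function on `ℝ²`. -/
noncomputable def pdy (w : ℝ × ℝ → ℝ) (p : ℝ × ℝ) : ℝ :=
  deriv (fun t => w (p.1, t)) p.2

/-- The Euclidean Laplacian `Δw = w_xx + w_yy` of a function on `ℝ²`. -/
noncomputable def lap (w : ℝ × ℝ → ℝ) (p : ℝ × ℝ) : ℝ :=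
  pdx (pdx w) p + pdy (pdy w) p

open Filter Topology

/-!
Write `G = ‖∇u‖²`. The chain rule gives `Δ log(1 + G) = ΔG / (1 + G) - ‖∇G‖² / (1 + G)²`.
Bochner's formula `ΔG = 2‖Hess u‖² + 2⟨∇u, ∇Δu⟩` computes the first term. For the second,
`∇G = 2 (Hess u)∇u`, and where `Δu = 0` the Hessian is a symmetric trace-free `2 × 2` matrix, so its
square is `½‖Hess u‖²` times the identity and `‖∇G‖² = 2‖Hess u‖² G`. The terms in `G ‖Hess u‖²`
cancel.
-/

/-- The squared norm `‖∇w‖² = w_x² + w_y²` of the gradient. -/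
noncomputable def gradSq (w : ℝ × ℝ → ℝ) (p : ℝ × ℝ) : ℝ :=
  pdx w p ^ 2 + pdy w p ^ 2

/-- The squared Frobenius norm `‖Hess w‖² = w_xx² + 2 w_xy² + w_yy²` of the Hessian. The mixed
derivative is `pdy (pdx w)`, so this is the norm of the Hessian only where `pdx` and `pdy`
commute on `w`. -/
noncomputable def hessSq (w : ℝ × ℝ → ℝ) (p : ℝ × ℝ) : ℝ :=
  pdx (pdx w) p ^ 2 + 2 * pdy (pdx w) p ^ 2 + pdy (pdy w) p ^ 2

lemma deriv_deriv_comp {𝕜 : Type*} [NontriviallyNormedField 𝕜] {φ f : 𝕜 → 𝕜} {t : 𝕜}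
    (hφ : ContDiffAt 𝕜 2 φ (f t)) (hf : ContDiffAt 𝕜 2 f t) :
    deriv (deriv fun s => φ (f s)) t =
      deriv φ (f t) * deriv (deriv f) t + deriv (deriv φ) (f t) * deriv f t ^ 2 := by
  have h := iteratedDeriv_comp_two hφ hf
  simp only [iteratedDeriv_succ, iteratedDeriv_zero] at h
  rw [show (fun s => φ (f s)) = φ ∘ f from rfl, h]
  ring

section PartialDerivatives

variable {w v : ℝ × ℝ → ℝ} {p : ℝ × ℝ}

lemma hasDerivAt_pdx (hw : DifferentiableAt ℝ w p) :
    HasDerivAt (fun s => w (s, p.2)) (pdx w p) p.1 :=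
  (hw.comp p.1 (g := w) (f := fun s => (s, p.2)) (by fun_prop)).hasDerivAt

lemma hasDerivAt_pdy (hw : DifferentiableAt ℝ w p) :
    HasDerivAt (fun t => w (p.1, t)) (pdy w p) p.2 :=
  (hw.comp p.2 (g := w) (f := fun t => (p.1, t)) (by fun_prop)).hasDerivAt

lemma pdx_eq_fderiv (hw : DifferentiableAt ℝ w p) : pdx w p = fderiv ℝ w p (1, 0) :=
  (hw.hasFDerivAt.comp_hasDerivAt p.1
    ((hasDerivAt_id p.1).prodMk (hasDerivAt_const p.1 p.2))).deriv

lemma pdy_eq_fderiv (hw : DifferentiableAt ℝ w p) : pdy w p = fderiv ℝ w p (0, 1) :=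
  (hw.hasFDerivAt.comp_hasDerivAt p.2
    ((hasDerivAt_const p.2 p.1).prodMk (hasDerivAt_id p.2))).deriv

lemma pdx_congr (h : w =ᶠ[𝓝 p] v) : pdx w p = pdx v p :=
  EventuallyEq.deriv_eq <|
    (by fun_prop : Continuous fun s : ℝ => (s, p.2)).continuousAt.eventually h

lemma pdy_congr (h : w =ᶠ[𝓝 p] v) : pdy w p = pdy v p :=
  EventuallyEq.deriv_eq <|
    (by fun_prop : Continuous fun t : ℝ => (p.1, t)).continuousAt.eventually h

lemma pdx_const (c : ℝ) : pdx (fun _ => c) p = 0 :=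
  deriv_const _ _

lemma pdy_const (c : ℝ) : pdy (fun _ => c) p = 0 :=
  deriv_const _ _

lemma pdx_add (hw : DifferentiableAt ℝ w p) (hv : DifferentiableAt ℝ v p) :
    pdx (fun q => w q + v q) p = pdx w p + pdx v p :=
  ((hasDerivAt_pdx hw).add (hasDerivAt_pdx hv)).deriv

lemma pdy_add (hw : DifferentiableAt ℝ w p) (hv : DifferentiableAt ℝ v p) :
    pdy (fun q => w q + v q) p = pdy w p + pdy v p :=
  ((hasDerivAt_pdy hw).add (hasDerivAt_pdy hv)).deriv

lemma pdx_eventuallyEq_fderiv (hw : ContDiffAt ℝ 1 w p) :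
    pdx w =ᶠ[𝓝 p] fun q => fderiv ℝ w q (1, 0) :=
  (hw.eventually (by simp)).mono fun _ hq => pdx_eq_fderiv (hq.differentiableAt one_ne_zero)

lemma pdy_eventuallyEq_fderiv (hw : ContDiffAt ℝ 1 w p) :
    pdy w =ᶠ[𝓝 p] fun q => fderiv ℝ w q (0, 1) :=
  (hw.eventually (by simp)).mono fun _ hq => pdy_eq_fderiv (hq.differentiableAt one_ne_zero)

lemma contDiffAt_pdx {m n : WithTop ℕ∞} (hw : ContDiffAt ℝ n w p) (hmn : m + 1 ≤ n) :
    ContDiffAt ℝ m (pdx w) p :=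
  ((hw.fderiv_right hmn).clm_apply contDiffAt_const).congr_of_eventuallyEq
    (pdx_eventuallyEq_fderiv (hw.of_le (le_add_self.trans hmn)))

lemma contDiffAt_pdy {m n : WithTop ℕ∞} (hw : ContDiffAt ℝ n w p) (hmn : m + 1 ≤ n) :
    ContDiffAt ℝ m (pdy w) p :=
  ((hw.fderiv_right hmn).clm_apply contDiffAt_const).congr_of_eventuallyEq
    (pdy_eventuallyEq_fderiv (hw.of_le (le_add_self.trans hmn)))

lemma differentiableAt_pdx (hw : ContDiffAt ℝ 2 w p) : DifferentiableAt ℝ (pdx w) p :=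
  (contDiffAt_pdx hw one_add_one_eq_two.le).differentiableAt one_ne_zero

lemma differentiableAt_pdy (hw : ContDiffAt ℝ 2 w p) : DifferentiableAt ℝ (pdy w) p :=
  (contDiffAt_pdy hw one_add_one_eq_two.le).differentiableAt one_ne_zero

lemma pdx_pdy_comm (hw : ContDiffAt ℝ 2 w p) : pdx (pdy w) p = pdy (pdx w) p := by
  have hw1 : ContDiffAt ℝ 1 w p := hw.of_le one_le_two
  have hd : DifferentiableAt ℝ (fderiv ℝ w) p :=
    (hw.fderiv_right one_add_one_eq_two.le).differentiableAt one_ne_zero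
  have hxy : pdx (pdy w) p = fderiv ℝ (fderiv ℝ w) p (1, 0) (0, 1) := by
    rw [pdx_congr (pdy_eventuallyEq_fderiv hw1), pdx_eq_fderiv (by fun_prop),
      fderiv_clm_apply hd (by fun_prop)]
    simp
  have hyx : pdy (pdx w) p = fderiv ℝ (fderiv ℝ w) p (0, 1) (1, 0) := by
    rw [pdy_congr (pdx_eventuallyEq_fderiv hw1), pdy_eq_fderiv (by fun_prop),
      fderiv_clm_apply hd (by fun_prop)]
    simp
  rw [hxy, hyx, hw.isSymmSndFDerivAt (by simp)]

lemma pdx_pdy_eventuallyEq (hw : ContDiffAt ℝ 2 w p) : pdx (pdy w) =ᶠ[𝓝 p] pdy (pdx w) :=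
  (hw.eventually (by simp)).mono fun _ => pdx_pdy_comm

end PartialDerivatives

section Laplacian

variable {w v : ℝ × ℝ → ℝ} {p : ℝ × ℝ}

lemma lap_add (hw : ContDiffAt ℝ 2 w p) (hv : ContDiffAt ℝ 2 v p) :
    lap (fun q => w q + v q) p = lap w p + lap v p := by
  have hdiff : ∀ᶠ q in 𝓝 p, DifferentiableAt ℝ w q ∧ DifferentiableAt ℝ v q :=
    ((hw.eventually (by simp)).and (hv.eventually (by simp))).mono fun _ hq =>
      ⟨hq.1.differentiableAt two_ne_zero, hq.2.differentiableAt two_ne_zero⟩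
  rw [lap, pdx_congr (hdiff.mono fun _ hq => pdx_add hq.1 hq.2),
    pdy_congr (hdiff.mono fun _ hq => pdy_add hq.1 hq.2),
    pdx_add (differentiableAt_pdx hw) (differentiableAt_pdx hv),
    pdy_add (differentiableAt_pdy hw) (differentiableAt_pdy hv), lap, lap]
  ring

lemma lap_comp {φ : ℝ → ℝ} (hφ : ContDiffAt ℝ 2 φ (w p)) (hw : ContDiffAt ℝ 2 w p) :
    lap (fun q => φ (w q)) p = deriv φ (w p) * lap w p + deriv (deriv φ) (w p) * gradSq w p := by
  have hxx : pdx (pdx fun q => φ (w q)) p =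
      deriv φ (w p) * pdx (pdx w) p + deriv (deriv φ) (w p) * pdx w p ^ 2 :=
    deriv_deriv_comp (f := fun s => w (s, p.2)) hφ
      (ContDiffAt.comp p.1 (g := w) (f := fun s => (s, p.2)) hw (by fun_prop))
  have hyy : pdy (pdy fun q => φ (w q)) p =
      deriv φ (w p) * pdy (pdy w) p + deriv (deriv φ) (w p) * pdy w p ^ 2 :=
    deriv_deriv_comp (f := fun t => w (p.1, t)) hφ
      (ContDiffAt.comp p.2 (g := w) (f := fun t => (p.1, t)) hw (by fun_prop))
  rw [lap, hxx, hyy, lap, gradSq]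
  ring

lemma lap_sq (hw : ContDiffAt ℝ 2 w p) :
    lap (fun q => w q ^ 2) p = 2 * (gradSq w p + w p * lap w p) := by
  have hderiv : deriv (fun t : ℝ => t ^ 2) = fun t => 2 * t := by ext; simp
  rw [lap_comp (φ := fun t => t ^ 2) (by fun_prop) hw, hderiv, deriv_const_mul_field, deriv_id'']
  ring

lemma lap_log_one_add (hw : ContDiffAt ℝ 2 w p) (hp : 1 + w p ≠ 0) :
    lap (fun q => Real.log (1 + w q)) p =
      lap w p / (1 + w p) - gradSq w p / (1 + w p) ^ 2 := by
  have hderiv : deriv (fun t => Real.log (1 + t)) = fun t => (1 + t)⁻¹ := by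
    ext t
    rw [deriv_comp_const_add, Real.deriv_log]
  rw [lap_comp (φ := fun t => Real.log (1 + t)) (by fun_prop (disch := assumption)) hw, hderiv,
    deriv_comp_const_add (f := fun t => t⁻¹), deriv_inv]
  ring

lemma lap_pdx (hw : ContDiffAt ℝ 3 w p) : lap (pdx w) p = pdx (lap w) p := by
  have hx : ContDiffAt ℝ 2 (pdx w) p := contDiffAt_pdx hw two_add_one_eq_three.le
  have hy : ContDiffAt ℝ 2 (pdy w) p := contDiffAt_pdy hw two_add_one_eq_three.le
  have hcomm : pdy (pdx w) =ᶠ[𝓝 p] pdx (pdy w) :=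
    (pdx_pdy_eventuallyEq (hw.of_le (by norm_num))).symm
  calc lap (pdx w) p = pdx (pdx (pdx w)) p + pdx (pdy (pdy w)) p := by
        rw [lap, pdy_congr hcomm, pdx_pdy_comm hy]
    _ = pdx (lap w) p := (pdx_add (differentiableAt_pdx hx) (differentiableAt_pdy hy)).symm

lemma lap_pdy (hw : ContDiffAt ℝ 3 w p) : lap (pdy w) p = pdy (lap w) p := by
  have hx : ContDiffAt ℝ 2 (pdx w) p := contDiffAt_pdx hw two_add_one_eq_three.le
  have hy : ContDiffAt ℝ 2 (pdy w) p := contDiffAt_pdy hw two_add_one_eq_three.le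
  have hcomm : pdx (pdy w) =ᶠ[𝓝 p] pdy (pdx w) :=
    pdx_pdy_eventuallyEq (hw.of_le (by norm_num))
  calc lap (pdy w) p = pdy (pdx (pdx w)) p + pdy (pdy (pdy w)) p := by
        rw [lap, pdx_congr hcomm, pdx_pdy_comm hx]
    _ = pdy (lap w) p := (pdy_add (differentiableAt_pdx hx) (differentiableAt_pdy hy)).symm

end Laplacian

section GradientNorm

variable {u : ℝ × ℝ → ℝ} {p : ℝ × ℝ}

lemma contDiffAt_gradSq {m n : WithTop ℕ∞} (hu : ContDiffAt ℝ n u p) (hmn : m + 1 ≤ n) :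
    ContDiffAt ℝ m (gradSq u) p :=
  ((contDiffAt_pdx hu hmn).pow 2).add ((contDiffAt_pdy hu hmn).pow 2)

lemma pdx_gradSq (hx : DifferentiableAt ℝ (pdx u) p) (hy : DifferentiableAt ℝ (pdy u) p) :
    pdx (gradSq u) p = 2 * (pdx u p * pdx (pdx u) p + pdy u p * pdx (pdy u) p) := by
  have h := ((hasDerivAt_pdx hx).fun_pow 2).fun_add ((hasDerivAt_pdx hy).fun_pow 2)
  refine h.deriv.trans ?_
  simp only [Nat.cast_ofNat, Prod.mk.eta, Nat.add_one_sub_one, pow_one]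
  ring

lemma pdy_gradSq (hx : DifferentiableAt ℝ (pdx u) p) (hy : DifferentiableAt ℝ (pdy u) p) :
    pdy (gradSq u) p = 2 * (pdx u p * pdy (pdx u) p + pdy u p * pdy (pdy u) p) := by
  have h := ((hasDerivAt_pdy hx).fun_pow 2).fun_add ((hasDerivAt_pdy hy).fun_pow 2)
  refine h.deriv.trans ?_
  simp only [Nat.cast_ofNat, Prod.mk.eta, Nat.add_one_sub_one, pow_one]
  ring

lemma gradSq_pdx_add_gradSq_pdy (hu : ContDiffAt ℝ 2 u p) :
    gradSq (pdx u) p + gradSq (pdy u) p = hessSq u p := by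
  rw [gradSq, gradSq, hessSq, pdx_pdy_comm hu]
  ring

lemma lap_gradSq (hu : ContDiffAt ℝ 3 u p) :
    lap (gradSq u) p =
      2 * (hessSq u p + (pdx u p * pdx (lap u) p + pdy u p * pdy (lap u) p)) := by
  have hx : ContDiffAt ℝ 2 (pdx u) p := contDiffAt_pdx hu two_add_one_eq_three.le
  have hy : ContDiffAt ℝ 2 (pdy u) p := contDiffAt_pdy hu two_add_one_eq_three.le
  calc lap (gradSq u) p
      = lap (fun q => pdx u q ^ 2) p + lap (fun q => pdy u q ^ 2) p :=
        lap_add (hx.pow 2) (hy.pow 2)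
    _ = 2 * (gradSq (pdx u) p + gradSq (pdy u) p
          + (pdx u p * lap (pdx u) p + pdy u p * lap (pdy u) p)) := by
        rw [lap_sq hx, lap_sq hy]
        ring
    _ = _ := by
        rw [gradSq_pdx_add_gradSq_pdy (hu.of_le (by norm_num)), lap_pdx hu, lap_pdy hu]

lemma gradSq_gradSq_of_lap_eq_zero (hu : ContDiffAt ℝ 2 u p) (hlap : lap u p = 0) :
    gradSq (gradSq u) p = 2 * hessSq u p * gradSq u p := by
  have hx : DifferentiableAt ℝ (pdx u) p := differentiableAt_pdx hu
  have hy : DifferentiableAt ℝ (pdy u) p := differentiableAt_pdy hu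
  have htrace : pdy (pdy u) p = -pdx (pdx u) p := eq_neg_of_add_eq_zero_right hlap
  rw [gradSq, pdx_gradSq hx hy, pdy_gradSq hx hy, pdx_pdy_comm hu, hessSq, gradSq, htrace]
  ring

end GradientNorm

theorem laplacian_log_one_add_gradsq_general {u : ℝ × ℝ → ℝ} {p : ℝ × ℝ}
    (hu : ContDiffAt ℝ 3 u p) (hlap : lap u p = 0)
    (hgrad : pdx u p * pdx (lap u) p + pdy u p * pdy (lap u) p = 0) :
    lap (fun q => Real.log (1 + gradSq u q)) p = 2 * hessSq u p / (1 + gradSq u p) ^ 2 := by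
  have hpos : 0 < 1 + gradSq u p := by
    unfold gradSq
    positivity
  calc lap (fun q => Real.log (1 + gradSq u q)) p
      = lap (gradSq u) p / (1 + gradSq u p) - gradSq (gradSq u) p / (1 + gradSq u p) ^ 2 :=
        lap_log_one_add (contDiffAt_gradSq hu two_add_one_eq_three.le) hpos.ne'
    _ = 2 * hessSq u p / (1 + gradSq u p)
          - 2 * hessSq u p * gradSq u p / (1 + gradSq u p) ^ 2 := by
        rw [lap_gradSq hu, hgrad, add_zero,
          gradSq_gradSq_of_lap_eq_zero (hu.of_le (by norm_num)) hlap]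
    _ = 2 * hessSq u p / (1 + gradSq u p) ^ 2 := by
        field_simp
        ring

/-- For a smooth harmonic function `u` on an open set `Ω ⊆ ℝ²`,
`Δ log(1 + ‖∇u‖²) = 2‖Hess u‖² / (1 + ‖∇u‖²)²`, where
`‖∇u‖² = u_x² + u_y²` and `‖Hess u‖² = u_xx² + 2u_xy² + u_yy²`. -/
theorem laplacian_log_one_add_gradsq (Ω : Set (ℝ × ℝ)) (hΩ : IsOpen Ω)
    (u : ℝ × ℝ → ℝ) (hu : ContDiffOn ℝ (⊤ : ℕ∞) u Ω)
    (hharm : ∀ p ∈ Ω, lap u p = 0) :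
    ∀ p ∈ Ω,
      lap (fun q => Real.log (1 + ((pdx u q) ^ 2 + (pdy u q) ^ 2))) p =
        2 * ((pdx (pdx u) p) ^ 2 + 2 * (pdy (pdx u) p) ^ 2 + (pdy (pdy u) p) ^ 2) /
          (1 + ((pdx u p) ^ 2 + (pdy u p) ^ 2)) ^ 2 := by
  intro p hp
  have hu3 : ContDiffAt ℝ 3 u p :=
    (hu.contDiffAt (hΩ.mem_nhds hp)).of_le (WithTop.coe_le_coe.2 le_top)
  have hlap : lap u =ᶠ[𝓝 p] fun _ => 0 := eventually_of_mem (hΩ.mem_nhds hp) hharm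
  exact laplacian_log_one_add_gradsq_general hu3 (hharm p hp)
    (by rw [pdx_congr hlap, pdy_congr hlap, pdx_const, pdy_const, mul_zero, mul_zero, add_zero])
end
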